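/- arXiv:2409.04866 — 2 statements merged into one kernel-verified Lean document; each statement's English description precedes it below -/
import Mathlib

section
/- Let 0<p≤1 and X be a complex Banach space. For every F∈H_p(𝔻,X) the limit Γ(F)(g) := lim_{s→1⁻} ∫_{−1/2}^{1/2} F(s e^{2πit}) g(t) dt exists for every g∈C^∞(𝕋,ℂ) and defines an element Γ(F)∈D'(𝕋,X); moreover Γ: H_p(𝔻,X)→D'(𝕋,X) is linear and continuous. -/
/-!
Statement 9: Let `0 < p ≤ 1` and `X` be a complex Banach space. For every `F ∈ H_p(𝔻,X)` the
limit `Γ(F)(g) := lim_{s→1⁻} ∫_{-1/2}^{1/2} F(s e^{2πit}) g(t) dt` exists for every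
`g ∈ C^∞(𝕋,ℂ)` and defines an element `Γ(F) ∈ D'(𝕋,X)`; moreover `Γ : H_p(𝔻,X) → D'(𝕋,X)`
is linear and continuous (bounded by `‖F‖_{H_p}` times finitely many test-function
seminorms).
-/

noncomputable section
open Filter Topology MeasureTheory ENNReal

def I₀ : Set ℝ := Set.Ico (-(1 : ℝ)/2) (1/2)

def circlePt (r t : ℝ) : ℂ := (r : ℂ) * Complex.exp (2 * Real.pi * t * Complex.I)

def hpIntegral {X : Type*} [NormedAddCommGroup X] (p : ℝ) (F : ℂ → X) (r : ℝ) : ℝ≥0∞ :=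
  ∫⁻ t in I₀, (‖F (circlePt r t)‖₊ : ℝ≥0∞) ^ p

/-- Membership in the Hardy space `H_p(𝔻,X)`. -/
def memHpD {X : Type*} [NormedAddCommGroup X] [NormedSpace ℂ X] (p : ℝ) (F : ℂ → X) : Prop :=
  DifferentiableOn ℂ F (Metric.ball 0 1) ∧
  ∃ B : ℝ≥0∞, B < ⊤ ∧ ∀ r : ℝ, 0 ≤ r → r < 1 → hpIntegral p F r ≤ B

/-- The quasi-norm of `H_p(𝔻,X)` (with values in `[0,∞]`). -/
def qHpD {X : Type*} [NormedAddCommGroup X] (p : ℝ) (F : ℂ → X) : ℝ≥0∞ :=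
  ⨆ r : Set.Ico (0 : ℝ) 1, (hpIntegral p F r.1) ^ (1/p)

/-- Smooth `1`-periodic complex test functions on the circle. -/
def Smooth1PeriodicC (g : ℝ → ℂ) : Prop := ContDiff ℝ (⊤ : ℕ∞) g ∧ ∀ t, g (t + 1) = g t

def testSeminormC (i : ℕ) (g : ℝ → ℂ) : ℝ :=
  ⨆ t : Set.Icc (0 : ℝ) 1, ‖iteratedDeriv i g t‖

/-- `u ∈ D'(𝕋,X)`: linear and continuous on smooth `1`-periodic test functions. -/
def IsPeriodicDistributionC {X : Type*} [NormedAddCommGroup X] [NormedSpace ℂ X]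
    (u : (ℝ → ℂ) → X) : Prop :=
  (∀ g h, Smooth1PeriodicC g → Smooth1PeriodicC h → u (g + h) = u g + u h) ∧
  (∀ (c : ℂ) (g), Smooth1PeriodicC g → u (c • g) = c • u g) ∧
  ∃ (k : ℕ) (C : ℝ), ∀ g, Smooth1PeriodicC g →
    ‖u g‖ ≤ C * ∑ i ∈ Finset.range (k + 1), testSeminormC i g

/-!
A Hardy–Littlewood argument turns the bound on the `Lᵖ` means of `F` over circles into the
pointwise growth estimate `‖F z‖ = O((1 - |z|)^(-1/p))`. By Cauchy's estimate the Taylor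
coefficients `aₙ` of `F` then grow at most polynomially in `n`, while the Fourier coefficients of a
test function `g` decay faster than any power. The pairing of `F` and `g` over the circle of radius
`s` is `∑ sⁿ ĝ(-n) aₙ`, so by dominated convergence it tends to the absolutely convergent sum
`∑ ĝ(-n) aₙ` as `s → 1⁻`.
-/

section

open Metric

variable {X : Type*} [NormedAddCommGroup X] [NormedSpace ℂ X]

/-! ### Circle averages -/

lemma circlePt_eq_circleMap (r t : ℝ) : circlePt r t = circleMap 0 r (2 * Real.pi * t) := by
  simp [circlePt, circleMap]

lemma norm_circlePt (r t : ℝ) : ‖circlePt r t‖ = |r| := by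
  rw [circlePt_eq_circleMap, norm_circleMap_zero]

lemma circlePt_mem_sphere (r t : ℝ) : circlePt r t ∈ sphere 0 |r| := by
  rw [mem_sphere_zero_iff_norm, norm_circlePt]

lemma continuous_circlePt (r : ℝ) : Continuous (circlePt r) := by
  unfold circlePt
  fun_prop

lemma setIntegral_I₀ {E : Type*} [NormedAddCommGroup E] [NormedSpace ℝ E] (f : ℝ → E) :
    ∫ t in I₀, f t = ∫ t in (-(1 : ℝ) / 2)..(1 / 2), f t := by
  rw [intervalIntegral.integral_of_le (by norm_num), I₀, integral_Ico_eq_integral_Ioc]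

lemma integrableOn_I₀ {E : Type*} [NormedAddCommGroup E] {f : ℝ → E} (hf : Continuous f) :
    IntegrableOn f I₀ :=
  hf.integrableOn_Icc.mono_set Set.Ico_subset_Icc_self

lemma setIntegral_comp_circlePt {E : Type*} [NormedAddCommGroup E] [NormedSpace ℝ E]
    (f : ℂ → E) (r : ℝ) : ∫ t in I₀, f (circlePt r t) = Real.circleAverage f 0 r := by
  simp only [setIntegral_I₀, circlePt_eq_circleMap]
  rw [intervalIntegral.integral_comp_mul_left (fun θ => f (circleMap 0 r θ)) Real.two_pi_pos.ne',
    Real.circleAverage_eq_integral_add (-Real.pi),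
    intervalIntegral.integral_comp_add_right (fun θ => f (circleMap 0 r θ))]
  ring_nf

lemma norm_circleAverage_le_circleAverage_norm {E : Type*} [NormedAddCommGroup E] [NormedSpace ℝ E]
    (f : ℂ → E) (c : ℂ) (R : ℝ) :
    ‖Real.circleAverage f c R‖ ≤ Real.circleAverage (fun z => ‖f z‖) c R := by
  rw [Real.circleAverage, Real.circleAverage, norm_smul, smul_eq_mul, Real.norm_eq_abs,
    abs_of_pos (inv_pos.2 Real.two_pi_pos)]
  gcongr
  exact intervalIntegral.norm_integral_le_integral_norm Real.two_pi_pos.le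

lemma norm_le_mul_circleAverage_norm [CompleteSpace X] {F : ℂ → X} {c w : ℂ} {R : ℝ}
    (hF : DiffContOnCl ℂ F (ball c R)) (hw : w ∈ ball c R) :
    ‖F w‖ ≤ R / (R - dist w c) * Real.circleAverage (fun z => ‖F z‖) c R := by
  have hR : 0 < R := pos_of_mem_ball hw
  have hdist : 0 < R - dist w c := sub_pos.2 hw
  have hcont : ContinuousOn F (sphere c |R|) := by
    rw [abs_of_pos hR]
    exact hF.continuousOn_ball.mono sphere_subset_closedBall
  have hkernel : ∀ z ∈ sphere c |R|, ‖(z - c) / (z - w)‖ ≤ R / (R - dist w c) := by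
    intro z hz
    rw [abs_of_pos hR, mem_sphere] at hz
    rw [norm_div, ← dist_eq_norm, ← dist_eq_norm, hz]
    gcongr
    linarith [dist_triangle z w c]
  have hcauchy : Real.circleAverage (fun z => ((z - c) / (z - w)) • F z) c R = F w :=
    DiffContOnCl.circleAverage_smul_div (by rwa [abs_of_pos hR]) (by rwa [abs_of_pos hR])
  have hcontKernel : ContinuousOn (fun z => (z - c) / (z - w)) (sphere c |R|) := by
    refine ContinuousOn.div (by fun_prop) (by fun_prop) fun z hz hzw => ?_
    rw [sub_eq_zero.1 hzw, abs_of_pos hR] at hz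
    exact hw.ne hz
  calc ‖F w‖ ≤ Real.circleAverage (fun z => ‖((z - c) / (z - w)) • F z‖) c R := by
        rw [← hcauchy]
        exact norm_circleAverage_le_circleAverage_norm _ c R
    _ ≤ Real.circleAverage (fun z => (R / (R - dist w c)) • ‖F z‖) c R := by
        refine Real.circleAverage_mono (hcontKernel.smul hcont).norm.circleIntegrable'
          (ContinuousOn.circleIntegrable' (by fun_prop)) fun z hz => ?_
        rw [norm_smul, smul_eq_mul]
        gcongr
        exact hkernel z hz
    _ = R / (R - dist w c) * Real.circleAverage (fun z => ‖F z‖) c R :=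
        Real.circleAverage_fun_smul

lemma circleAverage_le_rpow_mul_circleAverage_rpow {f : ℂ → ℝ} {c : ℂ} {R m p : ℝ}
    (hp : 0 < p) (hp1 : p ≤ 1) (hf : ContinuousOn f (sphere c |R|))
    (hf0 : ∀ z ∈ sphere c |R|, 0 ≤ f z) (hfm : ∀ z ∈ sphere c |R|, f z ≤ m) :
    Real.circleAverage f c R ≤ m ^ (1 - p) * Real.circleAverage (fun z => f z ^ p) c R := by
  have hfp : ContinuousOn (fun z => f z ^ p) (sphere c |R|) :=
    hf.rpow_const fun _ _ => Or.inr hp.le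
  rw [← smul_eq_mul, ← Real.circleAverage_fun_smul]
  refine Real.circleAverage_mono hf.circleIntegrable'
    (ContinuousOn.circleIntegrable' (by fun_prop)) fun z hz => ?_
  calc f z = f z ^ (1 - p) * f z ^ p := by
        rw [← Real.rpow_add' (hf0 z hz) (by simp), sub_add_cancel, Real.rpow_one]
    _ ≤ m ^ (1 - p) * f z ^ p := by
        gcongr
        · exact Real.rpow_nonneg (hf0 z hz) p
        · exact hf0 z hz
        · exact hfm z hz

lemma nonneg_of_circleAverage_norm_rpow_le {Y : Type*} [NormedAddCommGroup Y] {F : ℂ → Y}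
    {c : ℂ} {R p P : ℝ} (h : Real.circleAverage (fun z => ‖F z‖ ^ p) c R ≤ P) : 0 ≤ P :=
  (Real.circleAverage_nonneg_of_nonneg fun _ _ => by positivity).trans h

/-! ### The Hardy–Littlewood growth estimate -/

lemma le_rpow_inv_of_le_mul_rpow_one_sub {x A p : ℝ} (hx : 0 ≤ x) (hA : 0 ≤ A) (hp : 0 < p)
    (h : x ≤ A * x ^ (1 - p)) : x ≤ A ^ p⁻¹ := by
  rcases hx.eq_or_lt with rfl | hx
  · positivity
  rw [Real.le_rpow_inv_iff_of_pos hx.le hA hp]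
  refine le_of_mul_le_mul_right ?_ (Real.rpow_pos_of_pos hx (1 - p))
  rwa [← Real.rpow_add hx, add_sub_cancel, Real.rpow_one]

lemma norm_le_two_rpow_mul_of_isMaxOn {E Y : Type*} [NormedAddCommGroup E] [NormedAddCommGroup Y]
    {F : E → Y} {a s : ℝ} {w ζ : E} (hw : ‖w‖ < s)
    (hmax : IsMaxOn (fun z => ‖F z‖ * (s - ‖z‖) ^ a) (closedBall 0 s) w)
    (hζ : ‖ζ‖ = (s + ‖w‖) / 2) : ‖F ζ‖ ≤ 2 ^ a * ‖F w‖ := by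
  have hd : 0 < (s - ‖w‖) / 2 := by linarith
  have hle : ‖F ζ‖ * (s - ‖ζ‖) ^ a ≤ ‖F w‖ * (s - ‖w‖) ^ a :=
    hmax (mem_closedBall_zero_iff.2 (by linarith))
  have hhalf : s - ‖ζ‖ = (s - ‖w‖) / 2 := by linarith
  have hdouble : (s - ‖w‖) ^ a = 2 ^ a * ((s - ‖w‖) / 2) ^ a := by
    rw [← Real.mul_rpow two_pos.le hd.le, mul_div_cancel₀ _ two_ne_zero]
  rw [hhalf, hdouble, ← mul_assoc, mul_comm ‖F w‖] at hle
  exact le_of_mul_le_mul_right hle (Real.rpow_pos_of_pos hd a)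

-- By maximality of the weighted norm at `w`, `‖F‖ ≤ 2 ^ p⁻¹ * ‖F w‖` on the circle of radius
-- `(s + ‖w‖) / 2`; hence `‖F‖ ≤ (2 ^ p⁻¹ * ‖F w‖) ^ (1 - p) * ‖F‖ ^ p` there, and Cauchy's formula
-- bounds `F w` by the mean of the right-hand side.
lemma norm_le_mul_norm_rpow_of_isMaxOn [CompleteSpace X] {F : ℂ → X} {p s P : ℝ} {w : ℂ}
    (hp : 0 < p) (hp1 : p ≤ 1) (hF : DifferentiableOn ℂ F (ball 0 s))
    (hP : ∀ r, 0 ≤ r → r < s → Real.circleAverage (fun z => ‖F z‖ ^ p) 0 r ≤ P) (hw : ‖w‖ < s)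
    (hmax : IsMaxOn (fun z => ‖F z‖ * (s - ‖z‖) ^ p⁻¹) (closedBall 0 s) w) :
    ‖F w‖ ≤ 2 ^ p⁻¹ * s * P / (s - ‖w‖) * ‖F w‖ ^ (1 - p) := by
  have hw0 := norm_nonneg w
  have hd : 0 < s - ‖w‖ := sub_pos.2 hw
  have hP0 := nonneg_of_circleAverage_norm_rpow_le (hP 0 le_rfl (hw0.trans_lt hw))
  set R := (s + ‖w‖) / 2 with hR
  have hR0 : 0 ≤ R := by linarith
  have hRs : R < s := by linarith
  have hRw : R - ‖w‖ = (s - ‖w‖) / 2 := by linarith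
  have hcont : ContinuousOn F (sphere 0 |R|) :=
    hF.continuousOn.mono (by rw [abs_of_nonneg hR0]; exact sphere_subset_ball hRs)
  have hmean : Real.circleAverage (fun z => ‖F z‖) 0 R ≤ (2 ^ p⁻¹ * ‖F w‖) ^ (1 - p) * P := by
    refine (circleAverage_le_rpow_mul_circleAverage_rpow hp hp1 hcont.norm
      (fun _ _ => norm_nonneg _) fun z hz => norm_le_two_rpow_mul_of_isMaxOn hw hmax ?_).trans ?_
    · rwa [mem_sphere_zero_iff_norm, abs_of_nonneg hR0] at hz
    · gcongr
      exact hP R hR0 hRs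
  have hcauchy : ‖F w‖ ≤ R / (R - ‖w‖) * Real.circleAverage (fun z => ‖F z‖) 0 R := by
    simpa using norm_le_mul_circleAverage_norm
      (hF.diffContOnCl_ball (closedBall_subset_ball hRs))
      (mem_ball_zero_iff.2 (by linarith : ‖w‖ < R))
  calc ‖F w‖ ≤ R / (R - ‖w‖) * ((2 ^ p⁻¹ * ‖F w‖) ^ (1 - p) * P) := by
        have hRw0 : 0 ≤ R - ‖w‖ := by linarith
        exact hcauchy.trans (by gcongr)
    _ ≤ s / ((s - ‖w‖) / 2) * ((2 ^ p⁻¹ * ‖F w‖) ^ (1 - p) * P) := by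
        rw [hRw]
        gcongr
    _ = 2 ^ p⁻¹ * s * P / (s - ‖w‖) * ‖F w‖ ^ (1 - p) := by
        rw [Real.mul_rpow (by positivity) (norm_nonneg _), ← Real.rpow_mul two_pos.le,
          show p⁻¹ * (1 - p) = p⁻¹ - 1 by field_simp, Real.rpow_sub two_pos, Real.rpow_one]
        field_simp

lemma norm_mul_rpow_le_of_isMaxOn [CompleteSpace X] {F : ℂ → X} {p s P : ℝ} {w : ℂ}
    (hp : 0 < p) (hp1 : p ≤ 1) (hF : DifferentiableOn ℂ F (ball 0 s))
    (hP : ∀ r, 0 ≤ r → r < s → Real.circleAverage (fun z => ‖F z‖ ^ p) 0 r ≤ P) (hw : ‖w‖ < s)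
    (hmax : IsMaxOn (fun z => ‖F z‖ * (s - ‖z‖) ^ p⁻¹) (closedBall 0 s) w) :
    ‖F w‖ * (s - ‖w‖) ^ p⁻¹ ≤ (2 ^ p⁻¹ * s * P) ^ p⁻¹ := by
  have hs : 0 < s := (norm_nonneg w).trans_lt hw
  have hP0 := nonneg_of_circleAverage_norm_rpow_le (hP 0 le_rfl hs)
  have hd : 0 < s - ‖w‖ := sub_pos.2 hw
  calc ‖F w‖ * (s - ‖w‖) ^ p⁻¹
      ≤ (2 ^ p⁻¹ * s * P / (s - ‖w‖)) ^ p⁻¹ * (s - ‖w‖) ^ p⁻¹ := by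
        gcongr
        exact le_rpow_inv_of_le_mul_rpow_one_sub (norm_nonneg _) (by positivity) hp
          (norm_le_mul_norm_rpow_of_isMaxOn hp hp1 hF hP hw hmax)
    _ = (2 ^ p⁻¹ * s * P) ^ p⁻¹ := by
        rw [← Real.mul_rpow (by positivity) hd.le, div_mul_cancel₀ _ hd.ne']

lemma norm_mul_rpow_le_of_circleAverage_le [CompleteSpace X] {F : ℂ → X} {p s P : ℝ}
    (hp : 0 < p) (hp1 : p ≤ 1) (hF : DifferentiableOn ℂ F (ball 0 s))
    (hcont : ContinuousOn F (closedBall 0 s))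
    (hP : ∀ r, 0 ≤ r → r < s → Real.circleAverage (fun z => ‖F z‖ ^ p) 0 r ≤ P)
    {z : ℂ} (hz : ‖z‖ < s) :
    ‖F z‖ * (s - ‖z‖) ^ p⁻¹ ≤ (2 ^ p⁻¹ * s * P) ^ p⁻¹ := by
  have hs : 0 < s := (norm_nonneg z).trans_lt hz
  have hP0 := nonneg_of_circleAverage_norm_rpow_le (hP 0 le_rfl hs)
  have hweight : ContinuousOn (fun z => ‖F z‖ * (s - ‖z‖) ^ p⁻¹) (closedBall 0 s) :=
    hcont.norm.mul ((by fun_prop : ContinuousOn (fun z : ℂ => s - ‖z‖) _).rpow_const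
      fun _ _ => Or.inr (by positivity))
  obtain ⟨w, hw, hmax⟩ := (isCompact_closedBall (0 : ℂ) s).exists_isMaxOn
    (nonempty_closedBall.2 hs.le) hweight
  refine (hmax (mem_closedBall_zero_iff.2 hz.le)).trans ?_
  rcases (mem_closedBall_zero_iff.1 hw).eq_or_lt with hws | hws
  · simp only [hws, sub_self, Real.zero_rpow (inv_pos.2 hp).ne', mul_zero]
    positivity
  · exact norm_mul_rpow_le_of_isMaxOn hp hp1 hF hP hws hmax

/-- Holomorphic functions on the unit disc of polynomial growth `O((1 - |z|)⁻ᴺ)` at the circle, with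
an explicit constant `M`. These are the functions which have distributional boundary values. -/
structure HasModerateGrowth (F : ℂ → X) (N : ℕ) (M : ℝ) : Prop where
  differentiableOn : DifferentiableOn ℂ F (ball 0 1)
  norm_mul_le : ∀ z, ‖z‖ < 1 → ‖F z‖ * (1 - ‖z‖) ^ N ≤ M

lemma HasModerateGrowth.nonneg {F : ℂ → X} {N : ℕ} {M : ℝ} (hF : HasModerateGrowth F N M) :
    0 ≤ M := by
  have h := hF.norm_mul_le 0 (by simp)
  rw [norm_zero, sub_zero, one_pow, mul_one] at h
  exact (norm_nonneg _).trans h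

lemma hasModerateGrowth_of_circleAverage_le [CompleteSpace X] {F : ℂ → X} {p P : ℝ}
    (hp : 0 < p) (hp1 : p ≤ 1) (hF : DifferentiableOn ℂ F (ball 0 1))
    (hP : ∀ r, 0 ≤ r → r < 1 → Real.circleAverage (fun z => ‖F z‖ ^ p) 0 r ≤ P) :
    HasModerateGrowth F ⌈p⁻¹⌉₊ ((2 * 2 ^ p⁻¹ * P) ^ p⁻¹) := by
  refine ⟨hF, fun z hz => ?_⟩
  have hz0 := norm_nonneg z
  have hP0 := nonneg_of_circleAverage_norm_rpow_le (hP 0 le_rfl one_pos)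
  set s := (1 + ‖z‖) / 2 with hs
  have hs1 : s < 1 := by linarith
  have hbound := norm_mul_rpow_le_of_circleAverage_le hp hp1
    (hF.mono (ball_subset_ball hs1.le)) (hF.continuousOn.mono (closedBall_subset_ball hs1))
    (fun r hr hrs => hP r hr (hrs.trans hs1)) (z := z) (by linarith)
  have hd : 0 ≤ s - ‖z‖ := by linarith
  calc ‖F z‖ * (1 - ‖z‖) ^ ⌈p⁻¹⌉₊
      ≤ ‖F z‖ * (1 - ‖z‖) ^ p⁻¹ := by
        rw [← Real.rpow_natCast]
        gcongr ‖F z‖ * ?_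
        exact Real.rpow_le_rpow_of_exponent_ge (by linarith) (by linarith) (Nat.le_ceil _)
    _ = 2 ^ p⁻¹ * (‖F z‖ * (s - ‖z‖) ^ p⁻¹) := by
        rw [show 1 - ‖z‖ = 2 * (s - ‖z‖) by linarith, Real.mul_rpow two_pos.le hd]
        ring
    _ ≤ 2 ^ p⁻¹ * (2 ^ p⁻¹ * 1 * P) ^ p⁻¹ := by
        gcongr
        exact hbound.trans (by gcongr)
    _ = (2 * 2 ^ p⁻¹ * P) ^ p⁻¹ := by
        rw [← Real.mul_rpow two_pos.le (by positivity)]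
        ring_nf

/-! ### Hardy spaces -/

lemma hpIntegral_eq_ofReal_circleAverage {Y : Type*} [NormedAddCommGroup Y] {p r : ℝ}
    (hp : 0 < p) {F : ℂ → Y} (hF : ContinuousOn F (sphere 0 |r|)) :
    hpIntegral p F r = ENNReal.ofReal (Real.circleAverage (fun z => ‖F z‖ ^ p) 0 r) := by
  have hcont : Continuous fun t => ‖F (circlePt r t)‖ ^ p :=
    (hF.comp_continuous (continuous_circlePt r) (circlePt_mem_sphere r)).norm.rpow_const
      fun _ => Or.inr hp.le
  rw [← setIntegral_comp_circlePt, ofReal_integral_eq_lintegral_ofReal (integrableOn_I₀ hcont)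
    (Eventually.of_forall fun t => by positivity)]
  refine lintegral_congr fun t => ?_
  rw [← ENNReal.ofReal_rpow_of_nonneg (norm_nonneg _) hp.le, ofReal_norm, enorm_eq_nnnorm]

lemma qHpD_lt_top {p : ℝ} (hp : 0 < p) {F : ℂ → X} (hF : memHpD p F) : qHpD p F < ⊤ := by
  obtain ⟨-, B, hB, hFB⟩ := hF
  refine (iSup_le fun r => ?_).trans_lt
    (ENNReal.rpow_lt_top_of_nonneg (one_div_pos.2 hp).le hB.ne)
  exact ENNReal.rpow_le_rpow (hFB r r.2.1 r.2.2) (one_div_pos.2 hp).le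

lemma hpIntegral_le_qHpD_rpow {Y : Type*} [NormedAddCommGroup Y] {p r : ℝ} (hp : 0 < p)
    (F : ℂ → Y) (hr : 0 ≤ r) (hr1 : r < 1) : hpIntegral p F r ≤ qHpD p F ^ p := by
  rw [← ENNReal.rpow_inv_le_iff hp, ← one_div]
  exact le_iSup (fun r : Set.Ico (0 : ℝ) 1 => hpIntegral p F r.1 ^ (1 / p)) ⟨r, hr, hr1⟩

lemma circleAverage_le_qHpD_rpow {p r : ℝ} (hp : 0 < p) {F : ℂ → X} (hF : memHpD p F)
    (hr : 0 ≤ r) (hr1 : r < 1) :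
    Real.circleAverage (fun z => ‖F z‖ ^ p) 0 r ≤ (qHpD p F).toReal ^ p := by
  have hcont : ContinuousOn F (sphere 0 |r|) :=
    hF.1.continuousOn.mono (by rw [abs_of_nonneg hr]; exact sphere_subset_ball hr1)
  have h := hpIntegral_le_qHpD_rpow hp F hr hr1
  rwa [hpIntegral_eq_ofReal_circleAverage hp hcont, ENNReal.ofReal_le_iff_le_toReal
    (ENNReal.rpow_lt_top_of_nonneg hp.le (qHpD_lt_top hp hF).ne).ne, ← ENNReal.toReal_rpow] at h

lemma hasModerateGrowth_of_memHpD [CompleteSpace X] {p : ℝ} (hp : 0 < p) (hp1 : p ≤ 1)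
    {F : ℂ → X} (hF : memHpD p F) :
    HasModerateGrowth F ⌈p⁻¹⌉₊ ((2 * 2 ^ p⁻¹) ^ p⁻¹ * (qHpD p F).toReal) := by
  have h := hasModerateGrowth_of_circleAverage_le hp hp1 hF.1
    fun r hr hr1 => circleAverage_le_qHpD_rpow hp hF hr hr1
  rwa [Real.mul_rpow (by positivity) (by positivity),
    Real.rpow_rpow_inv ENNReal.toReal_nonneg hp.ne'] at h

/-! ### Fourier coefficients of test functions -/

namespace Smooth1PeriodicC

variable {g h : ℝ → ℂ}

protected lemma continuous (hg : Smooth1PeriodicC g) : Continuous g := hg.1.continuous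

lemma add (hg : Smooth1PeriodicC g) (hh : Smooth1PeriodicC h) : Smooth1PeriodicC (g + h) :=
  ⟨hg.1.add hh.1, fun t => by simp only [Pi.add_apply, hg.2 t, hh.2 t]⟩

lemma const_smul (c : ℂ) (hg : Smooth1PeriodicC g) : Smooth1PeriodicC (c • g) :=
  ⟨hg.1.const_smul c, fun t => by simp only [Pi.smul_apply, hg.2 t]⟩

protected lemma iteratedDeriv (hg : Smooth1PeriodicC g) (i : ℕ) :
    Smooth1PeriodicC (iteratedDeriv i g) := by
  refine ⟨by rw [iteratedDeriv_eq_iterate]; exact hg.1.iterate_deriv i, fun t => ?_⟩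
  have hshift := congrFun (iteratedDeriv_comp_add_const i g 1) t
  rwa [funext hg.2, eq_comm] at hshift

lemma norm_iteratedDeriv_le_testSeminormC (hg : Smooth1PeriodicC g) (i : ℕ) (t : ℝ) :
    ‖iteratedDeriv i g t‖ ≤ testSeminormC i g := by
  have hper : Function.Periodic (iteratedDeriv i g) 1 := (hg.iteratedDeriv i).2
  have hbdd : BddAbove (Set.range fun t : Set.Icc (0 : ℝ) 1 => ‖iteratedDeriv i g t‖) := by
    rw [← Set.image_eq_range (fun t => ‖iteratedDeriv i g t‖)]
    exact isCompact_Icc.bddAbove_image (hg.iteratedDeriv i).continuous.norm.continuousOn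
  obtain ⟨u, hu, htu⟩ := hper.exists_mem_Ico₀ one_pos t
  rw [htu]
  exact le_ciSup hbdd ⟨u, Set.Ico_subset_Icc_self hu⟩

end Smooth1PeriodicC

lemma testSeminormC_nonneg (i : ℕ) (g : ℝ → ℂ) : 0 ≤ testSeminormC i g :=
  Real.iSup_nonneg fun _ => norm_nonneg _

lemma testSeminormC_le_sum {i k : ℕ} (hik : i ≤ k) (g : ℝ → ℂ) :
    testSeminormC i g ≤ ∑ j ∈ Finset.range (k + 1), testSeminormC j g :=
  Finset.single_le_sum (f := fun j => testSeminormC j g) (fun j _ => testSeminormC_nonneg j g)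
    (Finset.mem_range.2 (Nat.lt_succ_of_le hik))

/-- The `n`-th Fourier coefficient of `g` over the fundamental period `[-1/2, 1/2]`. -/
def periodCoeff (g : ℝ → ℂ) (n : ℤ) : ℂ :=
  fourierCoeffOn (a := -(1 : ℝ) / 2) (b := 1 / 2) (by norm_num) g n

lemma periodCoeff_neg_natCast (g : ℝ → ℂ) (n : ℕ) :
    periodCoeff g (-n) = ∫ t in I₀, g t * circlePt 1 t ^ n := by
  rw [periodCoeff, fourierCoeffOn_eq_integral, setIntegral_I₀,
    show 1 / ((1 : ℝ) / 2 - -1 / 2) = 1 by norm_num, one_smul]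
  refine intervalIntegral.integral_congr fun t _ => ?_
  rw [fourier_coe_apply, smul_eq_mul, mul_comm, circlePt, Complex.ofReal_one, one_mul,
    ← Complex.exp_nat_mul]
  congr 2
  push_cast
  ring

lemma norm_periodCoeff_le {g : ℝ → ℂ} {B : ℝ} (hB : ∀ t, ‖g t‖ ≤ B) (n : ℤ) :
    ‖periodCoeff g n‖ ≤ B := by
  rw [periodCoeff, fourierCoeffOn_eq_integral, show 1 / ((1 : ℝ) / 2 - -1 / 2) = 1 by norm_num,
    one_smul]
  refine (intervalIntegral.norm_integral_le_of_norm_le_const (C := B) fun t _ => ?_).trans_eq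
    (by norm_num)
  rw [norm_smul, fourier_apply, Circle.norm_coe, one_mul]
  exact hB t

namespace Smooth1PeriodicC

variable {g : ℝ → ℂ}

lemma abs_mul_norm_periodCoeff_le (hg : Smooth1PeriodicC g) (n : ℤ) :
    |(n : ℝ)| * ‖periodCoeff g n‖ ≤ ‖periodCoeff (deriv g) n‖ := by
  rcases eq_or_ne n 0 with rfl | hn
  · simp
  have hderiv : Continuous (deriv g) := by
    simpa only [iteratedDeriv_one] using (hg.iteratedDeriv 1).continuous
  have hends : g (1 / 2) - g (-1 / 2) = 0 := by
    rw [sub_eq_zero, ← hg.2 (-1 / 2)]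
    norm_num
  have hparts :
      periodCoeff g n = 1 / (-2 * Real.pi * Complex.I * n) * -periodCoeff (deriv g) n := by
    rw [periodCoeff, fourierCoeffOn_of_hasDerivAt _ hn
      (fun x _ => (hg.1.differentiable (by simp) x).hasDerivAt)
      (hderiv.intervalIntegrable _ _), hends, periodCoeff]
    push_cast
    ring
  have hn' : 0 < |(n : ℝ)| := by positivity
  rw [hparts]
  simp only [norm_mul, norm_div, norm_neg, norm_one, Complex.norm_ofNat, Complex.norm_real,
    Complex.norm_I, Complex.norm_intCast, Real.norm_eq_abs, abs_of_pos Real.pi_pos, mul_one]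
  rw [← mul_assoc, mul_one_div, mul_comm (2 * Real.pi), div_mul_cancel_left₀ hn'.ne']
  exact mul_le_of_le_one_left (norm_nonneg _)
    (inv_le_one_of_one_le₀ (by linarith [Real.two_le_pi]))

lemma abs_pow_mul_norm_periodCoeff_le (hg : Smooth1PeriodicC g) (n : ℤ) (k : ℕ) :
    |(n : ℝ)| ^ k * ‖periodCoeff g n‖ ≤ testSeminormC k g := by
  refine le_trans ?_ (norm_periodCoeff_le (hg.norm_iteratedDeriv_le_testSeminormC k) n)
  induction k with
  | zero => simp
  | succ k ih =>
    rw [iteratedDeriv_succ, pow_succ', mul_assoc]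
    exact (mul_le_mul_of_nonneg_left ih (abs_nonneg _)).trans
      ((hg.iteratedDeriv k).abs_mul_norm_periodCoeff_le n)

lemma abs_add_two_pow_mul_norm_periodCoeff_le (hg : Smooth1PeriodicC g) (n : ℤ) (k : ℕ) :
    (|(n : ℝ)| + 2) ^ k * ‖periodCoeff g n‖ ≤
      3 ^ k * ∑ i ∈ Finset.range (k + 1), testSeminormC i g := by
  suffices ∃ j ≤ k, (|(n : ℝ)| + 2) ^ k * ‖periodCoeff g n‖ ≤ 3 ^ k * testSeminormC j g by
    obtain ⟨j, hjk, hj⟩ := this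
    exact hj.trans (by gcongr; exact testSeminormC_le_sum hjk g)
  rcases eq_or_ne n 0 with rfl | hn
  · refine ⟨0, k.zero_le, ?_⟩
    have h0 := hg.abs_pow_mul_norm_periodCoeff_le 0 0
    rw [pow_zero, one_mul] at h0
    rw [Int.cast_zero, abs_zero, zero_add]
    gcongr
    norm_num
  · refine ⟨k, le_rfl, ?_⟩
    have hn1 : (1 : ℝ) ≤ |(n : ℝ)| := mod_cast Int.one_le_abs hn
    calc (|(n : ℝ)| + 2) ^ k * ‖periodCoeff g n‖
        ≤ (3 * |(n : ℝ)|) ^ k * ‖periodCoeff g n‖ := by gcongr; linarith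
      _ = 3 ^ k * (|(n : ℝ)| ^ k * ‖periodCoeff g n‖) := by rw [mul_pow, mul_assoc]
      _ ≤ 3 ^ k * testSeminormC k g := by
        gcongr
        exact hg.abs_pow_mul_norm_periodCoeff_le n k

end Smooth1PeriodicC

/-! ### Taylor coefficients -/

/-- The `n`-th Taylor coefficient of `F` at the origin. -/
def taylorCoeff (F : ℂ → X) (n : ℕ) : X :=
  (n.factorial : ℂ)⁻¹ • iteratedDeriv n F 0

lemma hasSum_pow_smul_taylorCoeff [CompleteSpace X] {F : ℂ → X} {r : ℝ} {z : ℂ}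
    (hF : DifferentiableOn ℂ F (ball 0 r)) (hz : z ∈ ball 0 r) :
    HasSum (fun n => z ^ n • taylorCoeff F n) (F z) := by
  refine (Complex.hasSum_taylorSeries_on_ball hF hz).congr_fun fun n => ?_
  rw [sub_zero, taylorCoeff, smul_comm]

lemma summable_pow_mul_norm_taylorCoeff [CompleteSpace X] {F : ℂ → X} {r s : ℝ}
    (hF : DifferentiableOn ℂ F (ball 0 r)) (hs : 0 ≤ s) (hsr : s < r) :
    Summable fun n => s ^ n * ‖taylorCoeff F n‖ := by
  obtain ⟨ρ, hsρ, hρr⟩ := exists_between hsr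
  have hρ : 0 < ρ := hs.trans_lt hsρ
  have hterms : (fun n => ρ ^ n * ‖taylorCoeff F n‖) =O[atTop] fun _ => (1 : ℝ) := by
    have hsum := hasSum_pow_smul_taylorCoeff hF (z := ρ) (by simpa [abs_of_pos hρ] using hρr)
    refine (hsum.summable.tendsto_atTop_zero.norm.isBigO_one ℝ).congr_left fun n => ?_
    rw [norm_smul, norm_pow, Complex.norm_of_nonneg hρ.le]
  refine summable_of_isBigO_nat (summable_geometric_of_lt_one (by positivity)
    ((div_lt_one hρ).2 hsρ)) (((Asymptotics.isBigO_refl (fun n => (s / ρ) ^ n) atTop).mul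
      hterms).congr (fun n => ?_) fun n => mul_one _)
  rw [div_pow, ← mul_assoc, div_mul_cancel₀ _ (by positivity)]

lemma HasModerateGrowth.norm_taylorCoeff_le [CompleteSpace X] {F : ℂ → X} {N : ℕ} {M : ℝ}
    (hF : HasModerateGrowth F N M) (n : ℕ) :
    ‖taylorCoeff F n‖ ≤ Real.exp 1 * M * ((n : ℝ) + 2) ^ N := by
  -- Cauchy's estimate on the circle of radius `r = 1 - 1 / (n + 2)`, for which `r⁻ⁿ ≤ e`.
  set r : ℝ := ((n : ℝ) + 1) / (n + 2) with hr
  have hM := hF.nonneg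
  have hr0 : 0 < r := by positivity
  have hr1 : r < 1 := by rw [hr, div_lt_one (by positivity)]; linarith
  have h1r : 1 - r = ((n : ℝ) + 2)⁻¹ := by rw [hr]; field_simp; ring
  have hsphere : ∀ z ∈ sphere (0 : ℂ) r, ‖F z‖ ≤ M * ((n : ℝ) + 2) ^ N := by
    intro z hz
    rw [mem_sphere_zero_iff_norm] at hz
    have h := hF.norm_mul_le z (hz ▸ hr1)
    rwa [hz, h1r, inv_pow, ← div_eq_mul_inv, div_le_iff₀ (by positivity)] at h
  have hcauchy := Complex.norm_iteratedDeriv_le_of_forall_mem_sphere_norm_le n hr0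
    (hF.differentiableOn.diffContOnCl_ball (closedBall_subset_ball hr1)) hsphere
  have hrn : (r ^ n)⁻¹ ≤ Real.exp 1 := by
    have hinv : r⁻¹ = 1 + ((n + 1 : ℕ) : ℝ)⁻¹ := by rw [hr]; push_cast; field_simp; ring
    rw [← inv_pow, hinv]
    exact (pow_le_pow_right₀ (le_add_of_nonneg_right (by positivity)) n.le_succ).trans
      Real.one_add_inv_pow_le_exp
  calc ‖taylorCoeff F n‖ = (n.factorial : ℝ)⁻¹ * ‖iteratedDeriv n F 0‖ := by
        rw [taylorCoeff, norm_smul, norm_inv, Complex.norm_natCast]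
    _ ≤ (n.factorial : ℝ)⁻¹ * (n.factorial * (M * ((n : ℝ) + 2) ^ N) / r ^ n) := by gcongr
    _ = (r ^ n)⁻¹ * (M * ((n : ℝ) + 2) ^ N) := by field_simp
    _ ≤ Real.exp 1 * (M * ((n : ℝ) + 2) ^ N) := by gcongr
    _ = Real.exp 1 * M * ((n : ℝ) + 2) ^ N := by ring

/-! ### Distributional boundary values -/

/-- The integral of `F` against `g` over the circle of radius `s`, for the arc measure of total
mass `1`. -/
def circlePairing (F : ℂ → X) (g : ℝ → ℂ) (s : ℝ) : X :=
  ∫ t in I₀, g t • F (circlePt s t)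

lemma hasSum_circlePairing [CompleteSpace X] {F : ℂ → X} {g : ℝ → ℂ} {s : ℝ}
    (hF : DifferentiableOn ℂ F (ball 0 1)) (hg : Continuous g) (hs : 0 ≤ s) (hs1 : s < 1) :
    HasSum (fun n : ℕ => (s : ℂ) ^ n • periodCoeff g (-n) • taylorCoeff F n)
      (circlePairing F g s) := by
  have hcirc := continuous_circlePt s
  have hterm : ∀ n : ℕ, Continuous fun t => (g t * circlePt s t ^ n) • taylorCoeff F n :=
    fun n => by fun_prop
  have hnorm : ∀ n : ℕ, ∫ t in I₀, ‖(g t * circlePt s t ^ n) • taylorCoeff F n‖ =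
      (∫ t in I₀, ‖g t‖) * (s ^ n * ‖taylorCoeff F n‖) := by
    intro n
    simp only [norm_smul, norm_mul, norm_pow, norm_circlePt, abs_of_nonneg hs, mul_assoc]
    rw [integral_mul_const]
  have hsum := hasSum_integral_of_summable_integral_norm (μ := volume.restrict I₀)
    (fun n => integrableOn_I₀ (hterm n))
    (((summable_pow_mul_norm_taylorCoeff hF hs hs1).mul_left _).congr fun n => (hnorm n).symm)
  convert hsum.congr_fun fun n => ?_ using 1
  · refine integral_congr_ae (Eventually.of_forall fun t => ?_)
    have hmem : circlePt s t ∈ ball (0 : ℂ) 1 := by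
      rwa [mem_ball_zero_iff, norm_circlePt, abs_of_nonneg hs]
    simp only [mul_smul]
    exact ((hasSum_pow_smul_taylorCoeff hF hmem).const_smul (g t)).tsum_eq.symm
  · have hscale : ∀ t, g t * circlePt s t ^ n = (s : ℂ) ^ n * (g t * circlePt 1 t ^ n) := by
      intro t
      rw [circlePt, circlePt, Complex.ofReal_one, one_mul, mul_pow]
      ring
    simp only [hscale]
    rw [integral_smul_const, integral_const_mul, ← periodCoeff_neg_natCast, mul_smul]

lemma tendsto_tsum_pow_smul_of_summable_norm [CompleteSpace X] {b : ℕ → X}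
    (hb : Summable fun n => ‖b n‖) :
    Tendsto (fun s : ℝ => ∑' n, (s : ℂ) ^ n • b n) (𝓝[<] 1) (𝓝 (∑' n, b n)) := by
  refine tendsto_tsum_of_dominated_convergence hb (fun n => ?_) ?_
  · have hcont : Continuous fun s : ℝ => (s : ℂ) ^ n • b n := by fun_prop
    simpa using (hcont.tendsto 1).mono_left nhdsWithin_le_nhds
  · filter_upwards [Ioo_mem_nhdsLT one_pos] with s hs n
    rw [norm_smul, norm_pow, Complex.norm_of_nonneg hs.1.le]
    exact mul_le_of_le_one_left (norm_nonneg _) (pow_le_one₀ hs.1.le hs.2.le)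

lemma summable_one_div_add_two_sq : Summable fun n : ℕ => 1 / ((n : ℝ) + 2) ^ 2 := by
  simpa using (summable_nat_add_iff (f := fun n : ℕ => 1 / (n : ℝ) ^ 2) 2).2
    (Real.summable_one_div_nat_pow.2 one_lt_two)

/-- The constant in the bound of the boundary distribution of a function of growth order `N` by
the test function seminorms up to order `N + 2`. -/
def boundaryConst (N : ℕ) : ℝ :=
  Real.exp 1 * 3 ^ (N + 2) * ∑' n : ℕ, 1 / ((n : ℝ) + 2) ^ 2

lemma boundaryConst_nonneg (N : ℕ) : 0 ≤ boundaryConst N := by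
  unfold boundaryConst
  positivity

open Classical in
/-- The boundary distribution `Γ(F)`. Off the test functions it is set to `0`, so that it is linear
in `F` as a function on all of `ℝ → ℂ`. -/
def boundaryDistribution (F : ℂ → X) (g : ℝ → ℂ) : X :=
  if Smooth1PeriodicC g then limUnder (𝓝[<] 1) (circlePairing F g) else 0

lemma boundaryDistribution_of_not_smooth (F : ℂ → X) {g : ℝ → ℂ} (hg : ¬Smooth1PeriodicC g) :
    boundaryDistribution F g = 0 :=
  if_neg hg

lemma boundaryDistribution_eq_of_tendsto {F : ℂ → X} {g : ℝ → ℂ} {L : X}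
    (hg : Smooth1PeriodicC g) (hL : Tendsto (circlePairing F g) (𝓝[<] 1) (𝓝 L)) :
    boundaryDistribution F g = L :=
  (if_pos hg).trans hL.limUnder_eq

section Linearity

variable {F G : ℂ → X} {g h : ℝ → ℂ} {s : ℝ}

lemma integrableOn_circlePairing (hF : DifferentiableOn ℂ F (ball 0 1)) (hg : Continuous g)
    (hs : s ∈ Set.Ioo (0 : ℝ) 1) : IntegrableOn (fun t => g t • F (circlePt s t)) I₀ := by
  refine integrableOn_I₀ (hg.smul (hF.continuousOn.comp_continuous (continuous_circlePt s)
    fun t => ?_))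
  rw [mem_ball_zero_iff, norm_circlePt, abs_of_pos hs.1]
  exact hs.2

lemma circlePairing_add_left (hF : DifferentiableOn ℂ F (ball 0 1))
    (hG : DifferentiableOn ℂ G (ball 0 1)) (hg : Continuous g) (hs : s ∈ Set.Ioo (0 : ℝ) 1) :
    circlePairing (F + G) g s = circlePairing F g s + circlePairing G g s := by
  simp only [circlePairing, Pi.add_apply, smul_add]
  exact integral_add (integrableOn_circlePairing hF hg hs) (integrableOn_circlePairing hG hg hs)

lemma circlePairing_add_right (hF : DifferentiableOn ℂ F (ball 0 1)) (hg : Continuous g)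
    (hh : Continuous h) (hs : s ∈ Set.Ioo (0 : ℝ) 1) :
    circlePairing F (g + h) s = circlePairing F g s + circlePairing F h s := by
  simp only [circlePairing, Pi.add_apply, add_smul]
  exact integral_add (integrableOn_circlePairing hF hg hs) (integrableOn_circlePairing hF hh hs)

lemma circlePairing_smul_left (c : ℂ) (F : ℂ → X) (g : ℝ → ℂ) (s : ℝ) :
    circlePairing (c • F) g s = c • circlePairing F g s := by
  simp only [circlePairing, Pi.smul_apply, smul_comm _ c, integral_smul]

lemma circlePairing_smul_right (c : ℂ) (F : ℂ → X) (g : ℝ → ℂ) (s : ℝ) :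
    circlePairing F (c • g) s = c • circlePairing F g s := by
  simp only [circlePairing, Pi.smul_apply, smul_assoc, integral_smul]

end Linearity

namespace HasModerateGrowth

variable [CompleteSpace X] {F G : ℂ → X} {N N' : ℕ} {M M' : ℝ} {g : ℝ → ℂ}

lemma norm_periodCoeff_smul_taylorCoeff_le (hF : HasModerateGrowth F N M)
    (hg : Smooth1PeriodicC g) (n : ℕ) :
    ‖periodCoeff g (-n) • taylorCoeff F n‖ ≤ Real.exp 1 * 3 ^ (N + 2) * M *
      (∑ i ∈ Finset.range (N + 2 + 1), testSeminormC i g) * (1 / ((n : ℝ) + 2) ^ 2) := by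
  have hM := hF.nonneg
  have hdecay := hg.abs_add_two_pow_mul_norm_periodCoeff_le (-n) (N + 2)
  rw [Int.cast_neg, abs_neg, Int.cast_natCast, Nat.abs_cast] at hdecay
  rw [norm_smul, mul_one_div, le_div_iff₀ (by positivity)]
  calc ‖periodCoeff g (-n)‖ * ‖taylorCoeff F n‖ * ((n : ℝ) + 2) ^ 2
      ≤ ‖periodCoeff g (-n)‖ * (Real.exp 1 * M * ((n : ℝ) + 2) ^ N) * ((n : ℝ) + 2) ^ 2 := by
        gcongr
        exact hF.norm_taylorCoeff_le n
    _ = Real.exp 1 * M * (((n : ℝ) + 2) ^ (N + 2) * ‖periodCoeff g (-n)‖) := by ring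
    _ ≤ Real.exp 1 * M *
          (3 ^ (N + 2) * ∑ i ∈ Finset.range (N + 2 + 1), testSeminormC i g) := by gcongr
    _ = _ := by ring

lemma tendsto_circlePairing_tsum (hF : HasModerateGrowth F N M) (hg : Smooth1PeriodicC g) :
    Tendsto (circlePairing F g) (𝓝[<] 1)
      (𝓝 (∑' n : ℕ, periodCoeff g (-n) • taylorCoeff F n)) := by
  have hsummable : Summable fun n : ℕ => ‖periodCoeff g (-n) • taylorCoeff F n‖ :=
    (summable_one_div_add_two_sq.mul_left _).of_nonneg_of_le (fun _ => norm_nonneg _)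
      (hF.norm_periodCoeff_smul_taylorCoeff_le hg)
  refine (tendsto_tsum_pow_smul_of_summable_norm hsummable).congr' ?_
  filter_upwards [Ioo_mem_nhdsLT one_pos] with s hs
  exact (hasSum_circlePairing hF.differentiableOn hg.continuous hs.1.le hs.2).tsum_eq

lemma boundaryDistribution_eq_tsum (hF : HasModerateGrowth F N M) (hg : Smooth1PeriodicC g) :
    boundaryDistribution F g = ∑' n : ℕ, periodCoeff g (-n) • taylorCoeff F n :=
  boundaryDistribution_eq_of_tendsto hg (hF.tendsto_circlePairing_tsum hg)

lemma tendsto_circlePairing (hF : HasModerateGrowth F N M) (hg : Smooth1PeriodicC g) :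
    Tendsto (circlePairing F g) (𝓝[<] 1) (𝓝 (boundaryDistribution F g)) := by
  rw [hF.boundaryDistribution_eq_tsum hg]
  exact hF.tendsto_circlePairing_tsum hg

lemma norm_boundaryDistribution_le (hF : HasModerateGrowth F N M) (hg : Smooth1PeriodicC g) :
    ‖boundaryDistribution F g‖ ≤
      boundaryConst N * M * ∑ i ∈ Finset.range (N + 2 + 1), testSeminormC i g := by
  rw [hF.boundaryDistribution_eq_tsum hg]
  refine (tsum_of_norm_bounded (summable_one_div_add_two_sq.mul_left _).hasSum
    (hF.norm_periodCoeff_smul_taylorCoeff_le hg)).trans_eq ?_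
  rw [tsum_mul_left, boundaryConst]
  ring

lemma isPeriodicDistributionC (hF : HasModerateGrowth F N M) :
    IsPeriodicDistributionC (boundaryDistribution F) := by
  refine ⟨fun g h hg hh => boundaryDistribution_eq_of_tendsto (hg.add hh) ?_,
    fun c g hg => boundaryDistribution_eq_of_tendsto (hg.const_smul c) ?_,
    N + 2, boundaryConst N * M, fun g hg => hF.norm_boundaryDistribution_le hg⟩
  · refine ((hF.tendsto_circlePairing hg).add (hF.tendsto_circlePairing hh)).congr' ?_
    filter_upwards [Ioo_mem_nhdsLT one_pos] with s hs
    exact (circlePairing_add_right hF.differentiableOn hg.continuous hh.continuous hs).symm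
  · exact ((hF.tendsto_circlePairing hg).const_smul c).congr fun s =>
      (circlePairing_smul_right c F g s).symm

lemma boundaryDistribution_add (hF : HasModerateGrowth F N M) (hG : HasModerateGrowth G N' M') :
    boundaryDistribution (F + G) = boundaryDistribution F + boundaryDistribution G := by
  funext g
  by_cases hg : Smooth1PeriodicC g
  · refine boundaryDistribution_eq_of_tendsto hg
      (((hF.tendsto_circlePairing hg).add (hG.tendsto_circlePairing hg)).congr' ?_)
    filter_upwards [Ioo_mem_nhdsLT one_pos] with s hs
    exact (circlePairing_add_left hF.differentiableOn hG.differentiableOn hg.continuous hs).symm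
  · simp only [Pi.add_apply, boundaryDistribution_of_not_smooth _ hg, add_zero]

lemma boundaryDistribution_smul (c : ℂ) (hF : HasModerateGrowth F N M) :
    boundaryDistribution (c • F) = c • boundaryDistribution F := by
  funext g
  by_cases hg : Smooth1PeriodicC g
  · exact boundaryDistribution_eq_of_tendsto hg
      (((hF.tendsto_circlePairing hg).const_smul c).congr fun s =>
        (circlePairing_smul_left c F g s).symm)
  · simp only [Pi.smul_apply, boundaryDistribution_of_not_smooth _ hg, smul_zero]

end HasModerateGrowth

lemma enorm_boundaryDistribution_le_qHpD [CompleteSpace X] {p : ℝ} (hp : 0 < p) (hp1 : p ≤ 1)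
    {F : ℂ → X} {g : ℝ → ℂ} (hF : memHpD p F) (hg : Smooth1PeriodicC g) :
    ‖boundaryDistribution F g‖ₑ ≤
      ENNReal.ofReal (boundaryConst ⌈p⁻¹⌉₊ * (2 * 2 ^ p⁻¹) ^ p⁻¹) * qHpD p F *
        ENNReal.ofReal (∑ i ∈ Finset.range (⌈p⁻¹⌉₊ + 2 + 1), testSeminormC i g) := by
  have hC := boundaryConst_nonneg ⌈p⁻¹⌉₊
  have hle := ENNReal.ofReal_le_ofReal
    ((hasModerateGrowth_of_memHpD hp hp1 hF).norm_boundaryDistribution_le hg)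
  rwa [ofReal_norm, ← mul_assoc, ENNReal.ofReal_mul (by positivity),
    ENNReal.ofReal_mul (by positivity), ENNReal.ofReal_toReal (qHpD_lt_top hp hF).ne] at hle

end

theorem boundary_distribution_exists {X : Type*} [NormedAddCommGroup X]
    [NormedSpace ℂ X] [CompleteSpace X] (p : ℝ) (hp : 0 < p) (hp1 : p ≤ 1) :
    ∃ Γ : (ℂ → X) → ((ℝ → ℂ) → X),
      (∀ F, memHpD p F → ∀ g : ℝ → ℂ, Smooth1PeriodicC g →
        Tendsto (fun s : ℝ => ∫ t in I₀, g t • F (circlePt s t))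
          (nhdsWithin 1 (Set.Iio 1)) (nhds (Γ F g))) ∧
      (∀ F, memHpD p F → IsPeriodicDistributionC (Γ F)) ∧
      (∀ F G, memHpD p F → memHpD p G → Γ (F + G) = Γ F + Γ G) ∧
      (∀ (c : ℂ) (F), memHpD p F → Γ (c • F) = c • Γ F) ∧
      ∃ (k : ℕ) (C : ℝ≥0∞), C < ⊤ ∧ ∀ F g, memHpD p F → Smooth1PeriodicC g →
        (‖Γ F g‖₊ : ℝ≥0∞) ≤
          C * qHpD p F * ENNReal.ofReal (∑ i ∈ Finset.range (k + 1), testSeminormC i g) := by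
  have growth {F : ℂ → X} (hF : memHpD p F) := hasModerateGrowth_of_memHpD hp hp1 hF
  exact ⟨boundaryDistribution,
    fun F hF g hg => (growth hF).tendsto_circlePairing hg,
    fun F hF => (growth hF).isPeriodicDistributionC,
    fun F G hF hG => (growth hF).boundaryDistribution_add (growth hG),
    fun c F hF => (growth hF).boundaryDistribution_smul c,
    ⌈p⁻¹⌉₊ + 2, ENNReal.ofReal (boundaryConst ⌈p⁻¹⌉₊ * (2 * 2 ^ p⁻¹) ^ p⁻¹), ENNReal.ofReal_lt_top,
    fun F g hF hg => enorm_boundaryDistribution_le_qHpD hp hp1 hF hg⟩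

end
end

section
/- Let X be a quasi-Banach space with a normalized unconditional basis X. Suppose X is power universal and permutatively equivalent to its square X². Then X has a unique unconditional basis, i.e., every normalized unconditional basis of X is permutatively equivalent to X. -/
/-!
Statement 16: Let `𝕏` be a quasi-Banach space with a normalized unconditional basis `X`.
If `X` is power universal and permutatively equivalent to its square, then `𝕏` has a unique
unconditional basis: every normalized unconditional basis of `𝕏` is permutatively equivalent
to `X`.
-/

noncomputable section
open Filter Topology

/-- `q` is a quasi-norm making the real vector space `M` a quasi-Banach space. -/
structure IsQuasiBanach {M : Type*} [AddCommGroup M] [Module ℝ M] (q : M → ℝ) : Prop where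
  q_nonneg : ∀ f, 0 ≤ q f
  q_pos : ∀ f, f ≠ 0 → 0 < q f
  q_smul : ∀ (c : ℝ) (f : M), q (c • f) = |c| * q f
  quasi_triangle : ∃ C : ℝ, 1 ≤ C ∧ ∀ f g, q (f + g) ≤ C * (q f + q g)
  complete : ∀ F : ℕ → M,
    (∀ ε : ℝ, 0 < ε → ∃ N, ∀ m ≥ N, ∀ n ≥ N, q (F m - F n) < ε) →
    ∃ g, Tendsto (fun n => q (F n - g)) atTop (nhds 0)

/-- Unconditional convergence of `∑ n, v n` to `f` (convergence of the net of finite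
partial sums). -/
def UncondSum {M ι : Type*} [AddCommGroup M] (q : M → ℝ) (v : ι → M) (f : M) : Prop :=
  ∀ ε : ℝ, 0 < ε → ∃ F : Finset ι, ∀ G : Finset ι, F ⊆ G → q ((∑ n ∈ G, v n) - f) < ε

/-- `x` is an unconditional basis of the whole space: every element has a unique
unconditionally convergent expansion `∑ a_n x_n`. -/
def IsUncondBasis {M ι : Type*} [AddCommGroup M] [Module ℝ M] (q : M → ℝ) (x : ι → M) : Prop :=
  ∀ f : M, ∃! a : ι → ℝ, UncondSum q (fun n => a n • x n) f

/-- `x` is normalized. -/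
def Normalized {M ι : Type*} (q : M → ℝ) (x : ι → M) : Prop := ∀ n, q (x n) = 1

/-- Two families indexed by the same set, possibly lying in different quasi-Banach spaces,
are `C`-equivalent: the correspondence of terms extends to an isomorphism of closed linear
spans, i.e. the quasi-norms of corresponding finitely supported linear combinations are
`C`-comparable. -/
def EquivalentFamilies {M M' ι : Type*} [AddCommGroup M] [Module ℝ M]
    [AddCommGroup M'] [Module ℝ M'] (q : M → ℝ) (q' : M' → ℝ)
    (x : ι → M) (y : ι → M') (C : ℝ) : Prop :=
  ∀ a : ι →₀ ℝ,
    C⁻¹ * q (∑ n ∈ a.support, a n • x n) ≤ q' (∑ n ∈ a.support, a n • y n) ∧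
    q' (∑ n ∈ a.support, a n • y n) ≤ C * q (∑ n ∈ a.support, a n • x n)

/-- Permutative equivalence (with some constant) of two families. -/
def PermutativelyEquivalent {M M' : Type*} {ι κ : Type*} [AddCommGroup M] [Module ℝ M]
    [AddCommGroup M'] [Module ℝ M'] (q : M → ℝ) (q' : M' → ℝ)
    (x : ι → M) (y : κ → M') : Prop :=
  ∃ (π : ι ≃ κ) (C : ℝ), 0 < C ∧ EquivalentFamilies q q' x (fun n => y (π n)) C

/-- `f` lies in the closed linear span of the family `x`. -/
def InClosedSpan {M ι : Type*} [AddCommGroup M] [Module ℝ M] (q : M → ℝ)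
    (x : ι → M) (f : M) : Prop :=
  ∀ ε : ℝ, 0 < ε → ∃ a : ι →₀ ℝ, q (f - ∑ n ∈ a.support, a n • x n) < ε

/-- `z` is an unconditional basic sequence: every element of its closed linear span has a
unique unconditionally convergent expansion. -/
def IsUncondBasicSeq {M κ : Type*} [AddCommGroup M] [Module ℝ M] (q : M → ℝ)
    (z : κ → M) : Prop :=
  ∀ f, InClosedSpan q z f → ∃! a : κ → ℝ, UncondSum q (fun m => a m • z m) f

/-- `z` is `K`-complemented: there are bounded linear functionals `z*_m` biorthogonal to `z`
such that `‖∑_m a_m z*_m(f) z_m‖ ≤ K` whenever `|a_m| ≤ 1` for all `m` and `‖f‖ ≤ 1`. -/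
def KComplemented {M κ : Type*} [AddCommGroup M] [Module ℝ M] (q : M → ℝ)
    (z : κ → M) (K : ℝ) : Prop :=
  ∃ zs : κ → (M →ₗ[ℝ] ℝ),
    (∀ m, ∃ Cm : ℝ, ∀ f, |zs m f| ≤ Cm * q f) ∧
    (∀ m, zs m (z m) = 1) ∧ (∀ m m', m ≠ m' → zs m (z m') = 0) ∧
    (∀ a : κ → ℝ, (∀ m, |a m| ≤ 1) → ∀ f, q f ≤ 1 →
      ∀ F : Finset κ, q (∑ m ∈ F, (a m * zs m f) • z m) ≤ K)

/-- The quasi-norm of the `s`-fold product `M^s`. -/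
def qPow {M : Type*} (q : M → ℝ) (s : ℕ) (f : Fin s → M) : ℝ := ⨆ i, q (f i)

/-- The `s`-fold product of the subbasis of `x` given by `S`, an unconditional basis of
`M^s` indexed by `Fin s × S`. -/
def powerFamily {M ι : Type*} [AddCommGroup M] [Module ℝ M] (x : ι → M)
    (S : Set ι) (s : ℕ) : Fin s × S → (Fin s → M) :=
  fun p => Pi.single p.1 (x p.2.1)

/-- `x` is a power universal basis of `(M, q)`: for every subbasis `Y = (x_n)_{n∈S}` and every
`K`-complemented normalized unconditional basic sequence `Z` in the closed linear span of `Y`,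
there are `s` and `C` depending only on `K` (and on `X`) such that `Z` is permutatively
`C`-equivalent to a subbasis of `Y^s`. -/
def PowerUniversal {M ι : Type*} [AddCommGroup M] [Module ℝ M] (q : M → ℝ)
    (x : ι → M) : Prop :=
  ∀ K : ℝ, 0 < K → ∃ (s : ℕ) (C : ℝ), 0 < C ∧
    ∀ (S : Set ι) (κ : Type) (_ : Countable κ) (z : κ → M),
      (∀ m, InClosedSpan q (fun n : S => x n.1) (z m)) →
      IsUncondBasicSeq q z → Normalized q z → KComplemented q z K →
      ∃ (T : Set (Fin s × S)) (π : κ ≃ T),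
        EquivalentFamilies q (qPow q s) z (fun m => powerFamily x S s (π m).1) C

/-!
Let `Y` be another normalized unconditional basis. A complemented embedding carries an
unconditional basis to a complemented unconditional basic sequence, to which power universality
applies after normalization. Applied to the identity, this embeds `Y` in a finite power of `X`.
Since `X` is equivalent to its square, it contains infinitely many disjoint copies of itself, so a
finite power of `X` embeds in `X` and `Y` is equivalent to a subfamily `(x (α m))` of `X`. The
projection of the space onto the span of this subfamily is bounded, so the space embeds in itself
with complemented range spanned by `(x (α m))`, and `X` itself embeds in a finite power `Y^s`.
Among `s` disjoint copies of each `x n` one can choose, by Hall's marriage theorem, a copy so that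
distinct indices go to distinct terms of `Y`; hence `X` is equivalent to a subfamily of `Y`. The
Cantor–Bernstein bijection built from the two injections matches `X` with `Y` up to a constant,
since unconditional families that are equivalent on each of two blocks are equivalent.
-/

namespace IsQuasiBanach

variable {M : Type*} [AddCommGroup M] [Module ℝ M] {q : M → ℝ}

/-- The modulus of concavity: a constant `C ≥ 1` with `q (f + g) ≤ C * (q f + q g)`. -/
def modulus (hq : IsQuasiBanach q) : ℝ := hq.quasi_triangle.choose

lemma one_le_modulus (hq : IsQuasiBanach q) : 1 ≤ hq.modulus := hq.quasi_triangle.choose_spec.1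

lemma modulus_pos (hq : IsQuasiBanach q) : 0 < hq.modulus := one_pos.trans_le hq.one_le_modulus

lemma q_add_le (hq : IsQuasiBanach q) (f g : M) : q (f + g) ≤ hq.modulus * (q f + q g) :=
  hq.quasi_triangle.choose_spec.2 f g

lemma q_zero (hq : IsQuasiBanach q) : q 0 = 0 := by
  simpa using hq.q_smul 0 0

lemma q_neg (hq : IsQuasiBanach q) (f : M) : q (-f) = q f := by
  simpa using hq.q_smul (-1) f

lemma q_sub_le (hq : IsQuasiBanach q) (f g : M) : q (f - g) ≤ hq.modulus * (q f + q g) := by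
  simpa only [hq.q_neg, ← sub_eq_add_neg] using hq.q_add_le f (-g)

lemma q_le_sub_add (hq : IsQuasiBanach q) (f g : M) :
    q f ≤ hq.modulus * (q (f - g) + q g) := by
  simpa only [sub_add_cancel] using hq.q_add_le (f - g) g

lemma q_sum_le (hq : IsQuasiBanach q) {α : Type*} (F : Finset α) (w : α → M) :
    q (∑ n ∈ F, w n) ≤ hq.modulus ^ F.card * ∑ n ∈ F, q (w n) := by
  classical
  have hC := hq.modulus_pos
  induction F using Finset.induction_on with
  | empty => simp [hq.q_zero]
  | insert a F ha ih =>
    rw [Finset.sum_insert ha, Finset.sum_insert ha, Finset.card_insert_of_notMem ha, pow_succ']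
    have hwa : q (w a) ≤ hq.modulus ^ F.card * q (w a) :=
      le_mul_of_one_le_left (hq.q_nonneg _) (one_le_pow₀ hq.one_le_modulus)
    calc q (w a + ∑ n ∈ F, w n)
        ≤ hq.modulus * (q (w a) + q (∑ n ∈ F, w n)) := hq.q_add_le _ _
      _ ≤ hq.modulus * (hq.modulus ^ F.card * q (w a) +
            hq.modulus ^ F.card * ∑ n ∈ F, q (w n)) := by gcongr
      _ = hq.modulus * hq.modulus ^ F.card * (q (w a) + ∑ n ∈ F, q (w n)) := by ring

/-- The neighbourhood basis of `0` formed by the balls of a quasi-norm. -/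
abbrev addGroupFilterBasis (hq : IsQuasiBanach q) : AddGroupFilterBasis M :=
  addGroupFilterBasisOfComm {U | ∃ ε : ℝ, 0 < ε ∧ U = {f | q f < ε}}
    ⟨_, 1, one_pos, rfl⟩
    (by
      rintro _ _ ⟨ε, hε, rfl⟩ ⟨δ, hδ, rfl⟩
      refine ⟨_, ⟨min ε δ, lt_min hε hδ, rfl⟩, fun f hf => ?_⟩
      rw [Set.mem_ofPred_eq, lt_min_iff] at hf
      exact hf)
    (by
      rintro _ ⟨ε, hε, rfl⟩
      exact hq.q_zero.trans_lt hε)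
    (by
      rintro _ ⟨ε, hε, rfl⟩
      have hC := hq.modulus_pos
      refine ⟨_, ⟨ε / (2 * hq.modulus), by positivity, rfl⟩, ?_⟩
      rintro _ ⟨f, hf, g, hg, rfl⟩
      calc q (f + g) ≤ hq.modulus * (q f + q g) := hq.q_add_le f g
        _ < hq.modulus * (ε / (2 * hq.modulus) + ε / (2 * hq.modulus)) := by
          gcongr
          exacts [hf, hg]
        _ = ε := by field)
    (by
      rintro _ ⟨ε, hε, rfl⟩
      exact ⟨_, ⟨ε, hε, rfl⟩, fun f hf => (hq.q_neg f).trans_lt hf⟩)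

end IsQuasiBanach

section Topology

/-- The balls of `q` form a neighbourhood basis of `0`. -/
abbrev HasBallBasis {M : Type*} [AddCommGroup M] [TopologicalSpace M] (q : M → ℝ) : Prop :=
  (𝓝 (0 : M)).HasBasis (0 < ·) fun ε : ℝ => {f | q f < ε}

variable {M : Type*} [AddCommGroup M] {q : M → ℝ}

lemma tendsto_nhds_iff_of_basis [TopologicalSpace M] [IsTopologicalAddGroup M]
    (hτ : HasBallBasis q) {α : Type*} {l : Filter α} {u : α → M} {g : M} :
    Tendsto u l (𝓝 g) ↔ ∀ ε : ℝ, 0 < ε → ∀ᶠ i in l, q (u i - g) < ε := by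
  rw [← tendsto_sub_nhds_zero_iff, hτ.tendsto_right_iff]
  rfl

lemma uncondSum_iff_hasSum [TopologicalSpace M] [IsTopologicalAddGroup M]
    (hτ : HasBallBasis q) {α : Type*} {v : α → M} {f : M} : UncondSum q v f ↔ HasSum v f := by
  simp only [HasSum, SummationFilter.unconditional_filter, tendsto_nhds_iff_of_basis hτ,
    eventually_atTop, UncondSum]

lemma HasBallBasis.uniformity_hasBasis [UniformSpace M] [IsUniformAddGroup M]
    (hτ : HasBallBasis q) :
    (uniformity M).HasBasis (0 < ·) fun ε : ℝ => {z | q (z.2 - z.1) < ε} := by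
  rw [uniformity_eq_comap_nhds_zero]
  exact hτ.comap _

variable [Module ℝ M]

lemma inClosedSpan_iff_mem_closure (hq : IsQuasiBanach q) [TopologicalSpace M]
    [IsTopologicalAddGroup M] (hτ : HasBallBasis q) {α : Type*} {x : α → M} {f : M} :
    InClosedSpan q x f ↔ f ∈ closure (Submodule.span ℝ (Set.range x) : Set M) := by
  rw [mem_closure_iff_nhds_basis (hτ.nhds_of_zero f)]
  simp only [InClosedSpan, SetLike.mem_coe, Finsupp.mem_span_range_iff_exists_finsupp,
    Set.mem_ofPred_eq, exists_exists_eq_and, Finsupp.sum, ← hq.q_neg (f - _), neg_sub]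

lemma continuous_of_quasiNorm_le {M' : Type*} [AddCommGroup M'] [Module ℝ M'] {q' : M' → ℝ}
    [TopologicalSpace M] [IsTopologicalAddGroup M] [TopologicalSpace M'] [IsTopologicalAddGroup M']
    (hτ : HasBallBasis q) (hτ' : HasBallBasis q') (hq : ∀ f, 0 ≤ q f) (T : M →ₗ[ℝ] M') {D : ℝ}
    (hT : ∀ f, q' (T f) ≤ D * q f) : Continuous T := by
  refine continuous_of_continuousAt_zero T ?_
  rw [ContinuousAt, map_zero, hτ.tendsto_iff hτ']
  refine fun ε hε => ⟨ε / (|D| + 1), by positivity, fun f hf => ?_⟩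
  calc q' (T f) ≤ D * q f := hT f
    _ ≤ (|D| + 1) * q f := by
      have := hq f
      gcongr
      linarith [le_abs_self D]
    _ < (|D| + 1) * (ε / (|D| + 1)) := by gcongr; exact hf
    _ = ε := by field

lemma IsQuasiBanach.completeSpace (hq : IsQuasiBanach q) [UniformSpace M] [IsUniformAddGroup M]
    [(uniformity M).IsCountablyGenerated] (hτ : HasBallBasis q) : CompleteSpace M := by
  refine UniformSpace.complete_of_cauchySeq_tendsto fun u hu => ?_
  have hcauchy := hτ.uniformity_hasBasis.cauchySeq_iff.1 hu
  obtain ⟨g, hg⟩ := hq.complete u fun ε hε => by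
    obtain ⟨N, hN⟩ := hcauchy ε hε
    exact ⟨N, fun m hm n hn => hN n hn m hm⟩
  exact ⟨g, (tendsto_nhds_iff_of_basis hτ).2 fun ε hε => hg.eventually (gt_mem_nhds hε)⟩

lemma IsQuasiBanach.continuousSMul (hq : IsQuasiBanach q) [TopologicalSpace M]
    [IsTopologicalAddGroup M] (hτ : HasBallBasis q) : ContinuousSMul ℝ M := by
  refine ContinuousSMul.of_nhds_zero ?_ (fun f => ?_) fun c => ?_
  · rw [((nhds_basis_zero_abs_lt ℝ).prod hτ).tendsto_iff hτ]
    refine fun ε hε => ⟨(1, ε), ⟨one_pos, hε⟩, fun p hp => ?_⟩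
    calc q (p.1 • p.2) = |p.1| * q p.2 := hq.q_smul _ _
      _ ≤ 1 * q p.2 := by gcongr; exacts [hq.q_nonneg _, hp.1.le]
      _ < ε := (one_mul _).trans_lt hp.2
  · refine (tendsto_nhds_iff_of_basis hτ).2 fun ε hε => ?_
    have hlim : Tendsto (fun c : ℝ => |c| * q f) (𝓝 0) (𝓝 0) :=
      (Continuous.tendsto' (by fun_prop) _ _ (by simp))
    filter_upwards [hlim.eventually_lt_const hε] with c hc
    rwa [sub_zero, hq.q_smul]
  · exact (continuous_of_quasiNorm_le hτ hτ hq.q_nonneg (LinearMap.lsmul ℝ M c)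
      fun f => (hq.q_smul c f).le).tendsto' 0 0 (smul_zero c)

lemma IsQuasiBanach.t2Space (hq : IsQuasiBanach q) [TopologicalSpace M] [IsTopologicalAddGroup M]
    (hτ : HasBallBasis q) : T2Space M :=
  IsTopologicalAddGroup.t2Space_of_zero_sep fun f hf =>
    ⟨{g | q g < q f}, hτ.mem_of_mem (hq.q_pos f hf), lt_irrefl (q f)⟩

theorem IsQuasiBanach.exists_uniformSpace (hq : IsQuasiBanach q) :
    ∃ _ : UniformSpace M, IsUniformAddGroup M ∧ ContinuousSMul ℝ M ∧ T2Space M ∧ CompleteSpace M ∧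
      (uniformity M).IsCountablyGenerated ∧ HasBallBasis q := by
  let _ : TopologicalSpace M := hq.addGroupFilterBasis.topology
  have : IsTopologicalAddGroup M := inferInstance
  let _ : UniformSpace M := IsTopologicalAddGroup.rightUniformSpace M
  have : IsUniformAddGroup M := isUniformAddGroup_of_addCommGroup
  have hτ : HasBallBasis q := by
    refine hq.addGroupFilterBasis.nhds_zero_hasBasis.to_hasBasis ?_ ?_
    · rintro _ ⟨ε, hε, rfl⟩
      exact ⟨ε, hε, subset_rfl⟩
    · exact fun ε hε => ⟨_, ⟨ε, hε, rfl⟩, subset_rfl⟩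
  have : (𝓝 (0 : M)).IsCountablyGenerated := by
    have hcomap : comap q (𝓝 0) = 𝓝 0 :=
      ((nhds_basis_zero_abs_lt ℝ).comap q).eq_of_same_basis
        (by simpa only [Set.preimage_ofPred_eq, abs_of_nonneg (hq.q_nonneg _)] using hτ)
    exact hcomap ▸ inferInstance
  have : (uniformity M).IsCountablyGenerated :=
    IsUniformAddGroup.uniformity_countably_generated
  exact ⟨_, ‹_›, hq.continuousSMul hτ, hq.t2Space hτ, hq.completeSpace hτ, ‹_›, hτ⟩

end Topology

section UncondSum

variable {M α : Type*} [AddCommGroup M] [Module ℝ M] {q : M → ℝ} {v w : α → M} {f g : M}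

lemma UncondSum.unique (hq : IsQuasiBanach q) (hf : UncondSum q v f) (hg : UncondSum q v g) :
    f = g := by
  obtain ⟨_, _, _, _, _, _, hτ⟩ := hq.exists_uniformSpace
  rw [uncondSum_iff_hasSum hτ] at hf hg
  exact hf.unique hg

lemma UncondSum.add (hq : IsQuasiBanach q) (hf : UncondSum q v f) (hg : UncondSum q w g) :
    UncondSum q (fun n => v n + w n) (f + g) := by
  obtain ⟨_, _, _, _, _, _, hτ⟩ := hq.exists_uniformSpace
  rw [uncondSum_iff_hasSum hτ] at hf hg ⊢
  exact hf.add hg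

lemma UncondSum.map {M' : Type*} [AddCommGroup M'] [Module ℝ M'] {q' : M' → ℝ}
    (hq : IsQuasiBanach q) (hq' : IsQuasiBanach q') (hf : UncondSum q v f) (T : M →ₗ[ℝ] M')
    {D : ℝ} (hT : ∀ f, q' (T f) ≤ D * q f) : UncondSum q' (fun n => T (v n)) (T f) := by
  obtain ⟨_, _, _, _, _, _, hτ⟩ := hq.exists_uniformSpace
  obtain ⟨_, _, _, _, _, _, hτ'⟩ := hq'.exists_uniformSpace
  rw [uncondSum_iff_hasSum hτ] at hf
  rw [uncondSum_iff_hasSum hτ']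
  exact hf.map T (continuous_of_quasiNorm_le hτ hτ' hq.q_nonneg T hT)

lemma UncondSum.const_smul (hq : IsQuasiBanach q) (hf : UncondSum q v f) (c : ℝ) :
    UncondSum q (fun n => c • v n) (c • f) :=
  hf.map hq hq (LinearMap.lsmul ℝ M c) fun f => (hq.q_smul c f).le

lemma uncondSum_sum_of_eq_zero (hq : IsQuasiBanach q) {F : Finset α} (hF : ∀ n ∉ F, v n = 0) :
    UncondSum q v (∑ n ∈ F, v n) := by
  obtain ⟨_, _, _, _, _, _, hτ⟩ := hq.exists_uniformSpace
  exact (uncondSum_iff_hasSum hτ).2 (hasSum_sum_of_ne_finset_zero hF)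

lemma exists_uncondSum_iff_vanishing (hq : IsQuasiBanach q) :
    (∃ f, UncondSum q v f) ↔
      ∀ ε : ℝ, 0 < ε → ∃ s : Finset α, ∀ t, Disjoint t s → q (∑ n ∈ t, v n) < ε := by
  obtain ⟨_, _, _, _, _, _, hτ⟩ := hq.exists_uniformSpace
  simp only [uncondSum_iff_hasSum hτ]
  refine summable_iff_vanishing.trans ⟨fun h ε hε => h _ (hτ.mem_of_mem hε), fun h U hU => ?_⟩
  obtain ⟨ε, hε, hεU⟩ := hτ.mem_iff.1 hU
  exact (h ε hε).imp fun s hs t ht => hεU (hs t ht)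

lemma UncondSum.bddAbove (hq : IsQuasiBanach q) (hf : UncondSum q v f) :
    BddAbove (Set.range fun F : Finset α => q (∑ n ∈ F, v n)) := by
  classical
  obtain ⟨s, hs⟩ := (exists_uncondSum_iff_vanishing hq).1 ⟨f, hf⟩ 1 one_pos
  obtain ⟨B, hB⟩ := (s.powerset.image fun F => q (∑ n ∈ F, v n)).bddAbove
  refine ⟨hq.modulus * (B + 1), ?_⟩
  rintro _ ⟨F, rfl⟩
  have hC := hq.modulus_pos
  calc q (∑ n ∈ F, v n) = q (∑ n ∈ F ∩ s, v n + ∑ n ∈ F \ s, v n) := by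
        rw [Finset.sum_inter_add_sum_sdiff]
    _ ≤ hq.modulus * (q (∑ n ∈ F ∩ s, v n) + q (∑ n ∈ F \ s, v n)) := hq.q_add_le _ _
    _ ≤ hq.modulus * (B + 1) := by
      gcongr
      · exact hB (Finset.mem_image_of_mem _ (Finset.mem_powerset.2 Finset.inter_subset_right))
      · exact (hs _ Finset.sdiff_disjoint).le

lemma UncondSum.q_le (hq : IsQuasiBanach q) (hf : UncondSum q v f) {B : ℝ}
    (hB : ∀ F : Finset α, q (∑ n ∈ F, v n) ≤ B) : q f ≤ hq.modulus * B := by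
  have hC := hq.modulus_pos
  refine le_of_forall_pos_le_add fun ε hε => ?_
  obtain ⟨F, hF⟩ := hf (ε / hq.modulus) (by positivity)
  have hFf := (hF F subset_rfl).le
  rw [← hq.q_neg, neg_sub] at hFf
  calc q f ≤ hq.modulus * (q (f - ∑ n ∈ F, v n) + q (∑ n ∈ F, v n)) := hq.q_le_sub_add _ _
    _ ≤ hq.modulus * (ε / hq.modulus + B) := by
      gcongr
      exact hB F
    _ = hq.modulus * B + ε := by field

lemma UncondSum.inClosedSpan (hq : IsQuasiBanach q) {a : α → ℝ}
    (hf : UncondSum q (fun n => a n • v n) f) : InClosedSpan q v f := by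
  obtain ⟨_, _, _, _, _, _, hτ⟩ := hq.exists_uniformSpace
  rw [inClosedSpan_iff_mem_closure hq hτ]
  exact mem_closure_of_tendsto ((uncondSum_iff_hasSum hτ).1 hf) (Eventually.of_forall fun F =>
    Submodule.sum_mem _ fun n _ =>
      Submodule.smul_mem _ _ (Submodule.subset_span (Set.mem_range_self n)))

lemma InClosedSpan.mono (hq : IsQuasiBanach q) {β : Type*} {w : β → M} (h : InClosedSpan q v f)
    (hvw : Set.range v ⊆ Set.range w) : InClosedSpan q w f := by
  obtain ⟨_, _, _, _, _, _, hτ⟩ := hq.exists_uniformSpace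
  rw [inClosedSpan_iff_mem_closure hq hτ] at h ⊢
  exact closure_mono (Submodule.span_mono hvw) h

end UncondSum

section OpenMapping

variable {M : Type*} [AddCommGroup M] [Module ℝ M] {q : M → ℝ}

lemma IsQuasiBanach.eq_of_tendsto (hq : IsQuasiBanach q) {α : Type*} {l : Filter α} [l.NeBot]
    {u : α → M} {f g : M} (hf : Tendsto (fun i => q (u i - f)) l (𝓝 0))
    (hg : Tendsto (fun i => q (u i - g)) l (𝓝 0)) : f = g := by
  by_contra hfg
  have hlim := (hg.add hf).const_mul hq.modulus
  rw [add_zero, mul_zero] at hlim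
  refine (hq.q_pos _ (sub_ne_zero.2 hfg)).not_ge (ge_of_tendsto' hlim fun i => ?_)
  simpa only [sub_sub_sub_cancel_left] using hq.q_sub_le (u i - g) (u i - f)

lemma IsQuasiBanach.one_div_two_mul_modulus_lt_one (hq : IsQuasiBanach q) :
    1 / (2 * hq.modulus) < 1 := by
  rw [div_lt_one (mul_pos two_pos hq.modulus_pos)]
  linarith [hq.one_le_modulus]

lemma IsQuasiBanach.q_sum_geometric_le (hq : IsQuasiBanach q) (n : ℕ) {w : ℕ → M} {B : ℝ}
    (hw : ∀ i, q (w i) ≤ B * (1 / (2 * hq.modulus)) ^ i) :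
    q (∑ i ∈ Finset.range n, w i) ≤ 2 * hq.modulus * B := by
  have hC := hq.modulus_pos
  have hB : q (w 0) ≤ B := by simpa only [pow_zero, mul_one] using hw 0
  induction n generalizing w B with
  | zero =>
    rw [Finset.range_zero, Finset.sum_empty, hq.q_zero]
    exact mul_nonneg (by positivity) ((hq.q_nonneg _).trans hB)
  | succ n ih =>
    have hshift : q (∑ i ∈ Finset.range n, w (i + 1)) ≤
        2 * hq.modulus * (B * (1 / (2 * hq.modulus))) :=
      ih (fun i => (hw (i + 1)).trans_eq (by ring)) (by simpa only [pow_one] using hw 1)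
    rw [Finset.sum_range_succ']
    calc q (∑ i ∈ Finset.range n, w (i + 1) + w 0)
        ≤ hq.modulus * (q (∑ i ∈ Finset.range n, w (i + 1)) + q (w 0)) := hq.q_add_le _ _
      _ ≤ hq.modulus * (2 * hq.modulus * (B * (1 / (2 * hq.modulus))) + B) := by gcongr
      _ = 2 * hq.modulus * B := by field

lemma IsQuasiBanach.exists_tendsto_sum_geometric (hq : IsQuasiBanach q) {w : ℕ → M} {B : ℝ}
    (hw : ∀ i, q (w i) ≤ B * (1 / (2 * hq.modulus)) ^ i) :
    ∃ g, Tendsto (fun n => q (∑ i ∈ Finset.range n, w i - g)) atTop (𝓝 0) ∧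
      q g ≤ 2 * hq.modulus ^ 2 * B := by
  have hC := hq.modulus_pos
  have htail (m k : ℕ) : q (∑ i ∈ Finset.range (m + k), w i - ∑ i ∈ Finset.range m, w i) ≤
      2 * hq.modulus * (B * (1 / (2 * hq.modulus)) ^ m) := by
    rw [Finset.sum_range_add_sub_sum_range]
    exact hq.q_sum_geometric_le k fun i => (hw (m + i)).trans_eq (by ring)
  have hlim : Tendsto (fun m => 2 * hq.modulus * (B * (1 / (2 * hq.modulus)) ^ m)) atTop (𝓝 0) := by
    simpa only [mul_zero] using ((tendsto_pow_atTop_nhds_zero_of_lt_one (by positivity)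
      hq.one_div_two_mul_modulus_lt_one).const_mul B).const_mul _
  obtain ⟨g, hg⟩ := hq.complete (fun n => ∑ i ∈ Finset.range n, w i) fun ε hε => by
    obtain ⟨N, hN⟩ := eventually_atTop.1 (hlim.eventually_lt_const hε)
    refine ⟨N, fun m hm n hn => ?_⟩
    rcases le_total m n with hmn | hnm
    · obtain ⟨k, rfl⟩ := Nat.exists_eq_add_of_le hmn
      rw [← hq.q_neg, neg_sub]
      exact (htail m k).trans_lt (hN m hm)
    · obtain ⟨k, rfl⟩ := Nat.exists_eq_add_of_le hnm
      exact (htail n k).trans_lt (hN n hn)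
  refine ⟨g, hg, ge_of_tendsto' (((hg.add_const (2 * hq.modulus * B)).const_mul hq.modulus).trans
    (by rw [zero_add]; ring_nf; rfl)) fun n => ?_⟩
  have hsub := hq.q_sub_le (∑ i ∈ Finset.range n, w i) (∑ i ∈ Finset.range n, w i - g)
  rw [sub_sub_self, add_comm] at hsub
  refine hsub.trans ?_
  gcongr
  exact hq.q_sum_geometric_le n hw

lemma exists_ball_subset_closure_image (hq : IsQuasiBanach q) [UniformSpace M]
    [IsUniformAddGroup M] [CompleteSpace M] [(uniformity M).IsCountablyGenerated]
    (hτ : HasBallBasis q) {N : Type*} (p : N → ℝ) {T : N → M} (hsurj : Function.Surjective T) :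
    ∃ (f₀ : M) (r B : ℝ), 0 < r ∧ 0 < B ∧
      ∀ h, q h < r → ∀ δ > 0, ∃ g, p g ≤ B ∧ q (f₀ + h - T g) < δ := by
  have hcover : ⋃ k : ℕ, closure (T '' {g | p g ≤ k}) = Set.univ := by
    refine Set.eq_univ_of_forall fun f => ?_
    obtain ⟨g, rfl⟩ := hsurj f
    obtain ⟨k, hk⟩ := exists_nat_ge (p g)
    exact Set.mem_iUnion.2 ⟨k, subset_closure ⟨g, hk, rfl⟩⟩
  obtain ⟨k, f₀, hf₀⟩ := nonempty_interior_of_iUnion_of_closed (fun _ => isClosed_closure) hcover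
  obtain ⟨r, hr, hball⟩ := (hτ.nhds_of_zero f₀).mem_iff.1 (mem_interior_iff_mem_nhds.1 hf₀)
  refine ⟨f₀, r, k + 1, hr, by positivity, fun h hh δ hδ => ?_⟩
  have hmem : f₀ + h ∈ closure (T '' {g | p g ≤ k}) := hball (by simpa using hh)
  obtain ⟨_, ⟨g, hg, rfl⟩, hgδ⟩ :=
    (mem_closure_iff_nhds_basis (hτ.nhds_of_zero (f₀ + h))).1 hmem δ hδ
  refine ⟨g, hg.trans (by linarith), ?_⟩
  rw [← hq.q_neg, neg_sub]
  exact hgδ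

variable {N : Type*} [AddCommGroup N] [Module ℝ N] {p : N → ℝ}

lemma exists_approx_preimage_of_lt (hp : IsQuasiBanach p) (hq : IsQuasiBanach q) {T : N →ₗ[ℝ] M}
    (hsurj : Function.Surjective T) :
    ∃ r > 0, ∃ B > 0, ∀ h, q h < r → ∀ δ > 0, ∃ g, p g ≤ B ∧ q (h - T g) ≤ δ := by
  have hCp := hp.modulus_pos
  have hCq := hq.modulus_pos
  obtain ⟨_, _, _, _, _, _, hτ⟩ := hq.exists_uniformSpace
  obtain ⟨f₀, r, B, hr, hB, happrox⟩ := exists_ball_subset_closure_image hq hτ p hsurj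
  refine ⟨r, hr, hp.modulus * (B + B), by positivity, fun h hh δ hδ => ?_⟩
  have hδ' : 0 < δ / (2 * hq.modulus) := by positivity
  obtain ⟨g₁, hg₁, h₁⟩ := happrox h hh _ hδ'
  obtain ⟨g₂, hg₂, h₂⟩ := happrox 0 (hq.q_zero.trans_lt hr) _ hδ'
  refine ⟨g₁ - g₂, (hp.q_sub_le _ _).trans (by gcongr), ?_⟩
  calc q (h - T (g₁ - g₂)) = q ((f₀ + h - T g₁) - (f₀ + 0 - T g₂)) := by
        rw [map_sub]
        congr 1
        abel
    _ ≤ hq.modulus * (q (f₀ + h - T g₁) + q (f₀ + 0 - T g₂)) := hq.q_sub_le _ _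
    _ ≤ hq.modulus * (δ / (2 * hq.modulus) + δ / (2 * hq.modulus)) := by gcongr
    _ = δ := by field

lemma exists_approx_preimage (hp : IsQuasiBanach p) (hq : IsQuasiBanach q) {T : N →ₗ[ℝ] M}
    (hsurj : Function.Surjective T) :
    ∃ R > 0, ∀ θ > 0, ∀ f, ∃ g, p g ≤ R * q f ∧ q (f - T g) ≤ θ * q f := by
  obtain ⟨r, hr, B, hB, happrox⟩ := exists_approx_preimage_of_lt hp hq hsurj
  refine ⟨2 / r * B, by positivity, fun θ hθ f => ?_⟩
  rcases eq_or_ne f 0 with rfl | hf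
  · exact ⟨0, by simp [hp.q_zero, hq.q_zero]⟩
  have hf' := hq.q_pos f hf
  set c := r / (2 * q f) with hc
  have hc0 : 0 < c := by positivity
  have hcf : q (c • f) < r := by
    rw [hq.q_smul, abs_of_pos hc0, hc]
    field_simp
    linarith
  obtain ⟨g, hg, hgf⟩ := happrox (c • f) hcf (θ * r / 2) (by positivity)
  refine ⟨c⁻¹ • g, ?_, ?_⟩
  · calc p (c⁻¹ • g) = c⁻¹ * p g := by rw [hp.q_smul, abs_of_pos (inv_pos.2 hc0)]
      _ ≤ c⁻¹ * B := by gcongr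
      _ = 2 / r * B * q f := by rw [hc]; field
  · calc q (f - T (c⁻¹ • g)) = q (c⁻¹ • (c • f - T g)) := by
          rw [smul_sub, inv_smul_smul₀ hc0.ne', map_smul]
      _ = c⁻¹ * q (c • f - T g) := by rw [hq.q_smul, abs_of_pos (inv_pos.2 hc0)]
      _ ≤ c⁻¹ * (θ * r / 2) := by gcongr
      _ = θ * q f := by rw [hc]; field

theorem exists_preimage_le (hp : IsQuasiBanach p) (hq : IsQuasiBanach q) {T : N →ₗ[ℝ] M}
    {D : ℝ} (hT : ∀ g, q (T g) ≤ D * p g) (hsurj : Function.Surjective T) :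
    ∃ R > 0, ∀ f, ∃ g, T g = f ∧ p g ≤ R * q f := by
  have hCp := hp.modulus_pos
  set θ := 1 / (2 * hp.modulus)
  have hθ0 : 0 < θ := by positivity
  obtain ⟨R, hR, happrox⟩ := exists_approx_preimage hp hq hsurj
  choose g hg hgf using happrox θ hθ0
  refine ⟨2 * hp.modulus ^ 2 * R, by positivity, fun f => ?_⟩
  set u : ℕ → M := fun n => (fun h => h - T (g h))^[n] f with hu
  have hu_succ (n : ℕ) : u (n + 1) = u n - T (g (u n)) := Function.iterate_succ_apply' _ _ _
  have hu_le (n : ℕ) : q (u n) ≤ θ ^ n * q f := by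
    induction n with
    | zero => simp [hu]
    | succ n ih =>
      calc q (u (n + 1)) ≤ θ * q (u n) := hu_succ n ▸ hgf (u n)
        _ ≤ θ * (θ ^ n * q f) := by gcongr
        _ = θ ^ (n + 1) * q f := by ring
  have hsum (n : ℕ) : T (∑ i ∈ Finset.range n, g (u i)) = f - u n := by
    rw [map_sum, show f = u 0 from rfl, ← Finset.sum_range_sub' u n]
    exact Finset.sum_congr rfl fun i _ => by rw [hu_succ, sub_sub_cancel]
  obtain ⟨G, hG, hGle⟩ := hp.exists_tendsto_sum_geometric (w := fun i => g (u i)) (B := R * q f)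
    fun i => (hg (u i)).trans (by
      rw [mul_assoc, mul_comm (q f)]
      gcongr
      exact hu_le i)
  refine ⟨G, hq.eq_of_tendsto (u := fun n => T (∑ i ∈ Finset.range n, g (u i))) (l := atTop) ?_ ?_,
    hGle.trans_eq (by ring)⟩
  · refine squeeze_zero (fun _ => hq.q_nonneg _) (fun n => ?_) (by simpa using hG.const_mul D)
    rw [← map_sub]
    exact hT _
  · refine squeeze_zero (fun _ => hq.q_nonneg _) (fun n => ?_)
      (by simpa using (tendsto_pow_atTop_nhds_zero_of_lt_one hθ0.le
        hp.one_div_two_mul_modulus_lt_one).mul_const (q f))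
    rw [hsum, sub_sub_cancel_left, hq.q_neg]
    exact hu_le n

end OpenMapping

section Multipliers

variable {M α : Type*} [AddCommGroup M] [Module ℝ M] {q : M → ℝ}

/-- Binary expansion of the multipliers: each step peels off the leading digit, whose indicator is
that of `{n | 1 / 2 ≤ a' n}`. -/
lemma exists_dyadic_approx (hq : IsQuasiBanach q) (k : ℕ) :
    ∃ c ≥ 0, ∀ (F : Finset α) (v : α → M) (ε : ℝ), (∀ G ⊆ F, q (∑ n ∈ G, v n) ≤ ε) →
      ∀ a ∈ Set.Icc (0 : α → ℝ) 1, ∃ a' ∈ Set.Icc (0 : α → ℝ) 1,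
        q (∑ n ∈ F, a n • v n - (1 / 2 : ℝ) ^ k • ∑ n ∈ F, a' n • v n) ≤ c * ε := by
  have hC := hq.modulus_pos
  induction k with
  | zero => exact ⟨0, le_rfl, fun F v ε _ a ha => ⟨a, ha, by simp [hq.q_zero]⟩⟩
  | succ k ih =>
    obtain ⟨c, hc, happrox⟩ := ih
    refine ⟨hq.modulus * (c + 1), by positivity, fun F v ε hε a ha => ?_⟩
    obtain ⟨a', ⟨ha'0, ha'1⟩, happ⟩ := happrox F v ε hε a ha
    set G := F.filter fun n => 1 / 2 ≤ a' n with hG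
    have hGε : q (∑ n ∈ G, v n) ≤ ε := hε G (Finset.filter_subset _ _)
    refine ⟨fun n => 2 * a' n - if 1 / 2 ≤ a' n then 1 else 0, ⟨fun n => ?_, fun n => ?_⟩, ?_⟩
    · have := ha'0 n
      simp only [Pi.zero_apply] at this ⊢
      split_ifs <;> linarith
    · have := ha'1 n
      simp only [Pi.one_apply] at this ⊢
      split_ifs <;> linarith
    have hsplit : ∑ n ∈ F, (2 * a' n - if 1 / 2 ≤ a' n then 1 else 0) • v n =
        (2 : ℝ) • ∑ n ∈ F, a' n • v n - ∑ n ∈ G, v n := by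
      simp only [sub_smul, mul_smul, ite_smul, one_smul, zero_smul, Finset.sum_sub_distrib,
        ← Finset.smul_sum, ← Finset.sum_filter, hG]
    calc q (∑ n ∈ F, a n • v n -
          (1 / 2 : ℝ) ^ (k + 1) • ∑ n ∈ F, (2 * a' n - if 1 / 2 ≤ a' n then 1 else 0) • v n)
        = q ((∑ n ∈ F, a n • v n - (1 / 2 : ℝ) ^ k • ∑ n ∈ F, a' n • v n) +
            (1 / 2 : ℝ) ^ (k + 1) • ∑ n ∈ G, v n) := by
          rw [hsplit]
          congr 1
          module
      _ ≤ hq.modulus * (c * ε + 1 * ε) := by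
          refine (hq.q_add_le _ _).trans ?_
          rw [hq.q_smul, abs_of_pos (by positivity)]
          gcongr
          exacts [hq.q_nonneg _, pow_le_one₀ one_half_pos.le one_half_lt_one.le]
      _ = hq.modulus * (c + 1) * ε := by ring

lemma exists_q_sum_smul_le_of_mem_Icc (hq : IsQuasiBanach q) :
    ∃ D > 0, ∀ (F : Finset α) (v : α → M) (ε : ℝ), (∀ G ⊆ F, q (∑ n ∈ G, v n) ≤ ε) →
      ∀ a ∈ Set.Icc (0 : α → ℝ) 1, q (∑ n ∈ F, a n • v n) ≤ D * ε := by
  have hC := hq.modulus_pos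
  obtain ⟨k, hk⟩ := exists_pow_lt_of_lt_one (y := (1 / 2 : ℝ)) (x := 1 / (2 * hq.modulus))
    (by positivity) (by norm_num)
  obtain ⟨c, hc, happrox⟩ := exists_dyadic_approx (α := α) hq k
  refine ⟨2 * (hq.modulus * (c + 1)), by positivity, fun F v ε hε => ?_⟩
  set S := ⨆ a : Set.Icc (0 : α → ℝ) 1, q (∑ n ∈ F, a.1 n • v n)
  have hbdd : BddAbove (Set.range fun a : Set.Icc (0 : α → ℝ) 1 => q (∑ n ∈ F, a.1 n • v n)) := by
    refine ⟨hq.modulus ^ F.card * ∑ n ∈ F, q (v n), ?_⟩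
    rintro _ ⟨⟨a, ha0, ha1⟩, rfl⟩
    refine (hq.q_sum_le F _).trans ?_
    gcongr with n
    rw [hq.q_smul, abs_of_nonneg (ha0 n)]
    exact mul_le_of_le_one_left (hq.q_nonneg _) (ha1 n)
  have hε0 : 0 ≤ ε := (hq.q_nonneg _).trans (hε ∅ (Finset.empty_subset _))
  have hS : S ≤ hq.modulus * (c + 1) * ε + S / 2 := by
    have : Nonempty (Set.Icc (0 : α → ℝ) 1) := ⟨⟨0, le_rfl, zero_le_one⟩⟩
    refine ciSup_le fun ⟨a, ha⟩ => ?_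
    obtain ⟨a', ha', happ⟩ := happrox F v ε hε a ha
    have hS' : q (∑ n ∈ F, a' n • v n) ≤ S := le_ciSup hbdd ⟨a', ha'⟩
    calc q (∑ n ∈ F, a n • v n)
        ≤ hq.modulus * (c * ε + (1 / 2) ^ k * q (∑ n ∈ F, a' n • v n)) := by
          refine (hq.q_le_sub_add _ ((1 / 2 : ℝ) ^ k • ∑ n ∈ F, a' n • v n)).trans ?_
          rw [hq.q_smul, abs_of_pos (by positivity)]
          gcongr
      _ ≤ hq.modulus * ((c + 1) * ε + 1 / (2 * hq.modulus) * S) := by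
          gcongr
          · linarith
          · exact hq.q_nonneg _
      _ = hq.modulus * (c + 1) * ε + S / 2 := by field
  intro a ha
  calc q (∑ n ∈ F, a n • v n) ≤ S := le_ciSup hbdd ⟨a, ha⟩
    _ ≤ 2 * (hq.modulus * (c + 1)) * ε := by linarith

lemma exists_q_sum_smul_le (hq : IsQuasiBanach q) :
    ∃ D > 0, ∀ (F : Finset α) (v : α → M) (ε : ℝ), (∀ G ⊆ F, q (∑ n ∈ G, v n) ≤ ε) →
      ∀ a : α → ℝ, (∀ n, |a n| ≤ 1) → q (∑ n ∈ F, a n • v n) ≤ D * ε := by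
  have hC := hq.modulus_pos
  obtain ⟨D, hD, hle⟩ := exists_q_sum_smul_le_of_mem_Icc (α := α) hq
  refine ⟨hq.modulus * (D + D), by positivity, fun F v ε hε a ha => ?_⟩
  have hpos := hle F v ε hε (fun n => (a n)⁺)
    ⟨fun n => posPart_nonneg _, fun n => sup_le (le_of_abs_le (ha n)) zero_le_one⟩
  have hneg := hle F v ε hε (fun n => (a n)⁻)
    ⟨fun n => negPart_nonneg _, fun n => sup_le ((neg_le_abs _).trans (ha n)) zero_le_one⟩
  calc q (∑ n ∈ F, a n • v n) = q (∑ n ∈ F, (a n)⁺ • v n - ∑ n ∈ F, (a n)⁻ • v n) := by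
        simp only [← Finset.sum_sub_distrib, ← sub_smul, posPart_sub_negPart]
    _ ≤ hq.modulus * (q (∑ n ∈ F, (a n)⁺ • v n) + q (∑ n ∈ F, (a n)⁻ • v n)) := hq.q_sub_le _ _
    _ ≤ hq.modulus * (D * ε + D * ε) := by gcongr
    _ = hq.modulus * (D + D) * ε := by ring

end Multipliers

namespace IsUncondBasis

variable {M ι : Type*} [AddCommGroup M] [Module ℝ M] {q : M → ℝ} {x : ι → M}

/-- The coordinate functionals of an unconditional basis. -/
def coord (hx : IsUncondBasis q x) (hq : IsQuasiBanach q) (n : ι) : M →ₗ[ℝ] ℝ where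
  toFun f := (hx f).choose n
  map_add' f g := by
    refine congrFun (g := fun n => (hx f).choose n + (hx g).choose n)
      ((hx (f + g)).unique (hx (f + g)).choose_spec.1 ?_) n
    simp only [add_smul]
    exact (hx f).choose_spec.1.add hq (hx g).choose_spec.1
  map_smul' c f := by
    refine congrFun (g := fun n => c • (hx f).choose n)
      ((hx (c • f)).unique (hx (c • f)).choose_spec.1 ?_) n
    simp only [smul_eq_mul, mul_smul]
    exact (hx f).choose_spec.1.const_smul hq c

lemma uncondSum_coord (hx : IsUncondBasis q x) (hq : IsQuasiBanach q) (f : M) :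
    UncondSum q (fun n => hx.coord hq n f • x n) f :=
  (hx f).choose_spec.1

lemma coord_of_uncondSum (hx : IsUncondBasis q x) (hq : IsQuasiBanach q) {f : M} {a : ι → ℝ}
    (h : UncondSum q (fun n => a n • x n) f) (n : ι) : hx.coord hq n f = a n :=
  congrFun ((hx f).unique (hx.uncondSum_coord hq f) h) n

lemma coord_linearCombination (hx : IsUncondBasis q x) (hq : IsQuasiBanach q) (a : ι →₀ ℝ)
    (n : ι) : hx.coord hq n (Finsupp.linearCombination ℝ x a) = a n :=
  hx.coord_of_uncondSum hq (uncondSum_sum_of_eq_zero hq fun m hm =>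
    (congrArg (· • x m) (Finsupp.notMem_support_iff.1 hm)).trans (zero_smul ℝ _)) n

lemma coord_apply (hx : IsUncondBasis q x) (hq : IsQuasiBanach q) (n m : ι) :
    hx.coord hq n (x m) = Finsupp.single m (1 : ℝ) n := by
  rw [← hx.coord_linearCombination hq, Finsupp.linearCombination_single, one_smul]

lemma coord_apply_self (hx : IsUncondBasis q x) (hq : IsQuasiBanach q) (n : ι) :
    hx.coord hq n (x n) = 1 := by
  rw [coord_apply, Finsupp.single_eq_same]

lemma ne_zero (hx : IsUncondBasis q x) (hq : IsQuasiBanach q) (n : ι) : x n ≠ 0 := fun h => by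
  simpa [h] using hx.coord_apply_self hq n

/-- The quasi-norm `f ↦ sup_F q (∑_{n ∈ F} x*_n(f) x_n)`, over finite sets `F`, of an
unconditional basis. -/
def partialSumNorm (hx : IsUncondBasis q x) (hq : IsQuasiBanach q) (f : M) : ℝ :=
  ⨆ F : Finset ι, q (∑ n ∈ F, hx.coord hq n f • x n)

lemma q_sum_coord_le (hx : IsUncondBasis q x) (hq : IsQuasiBanach q) (f : M) (F : Finset ι) :
    q (∑ n ∈ F, hx.coord hq n f • x n) ≤ hx.partialSumNorm hq f :=
  le_ciSup ((hx.uncondSum_coord hq f).bddAbove hq) F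

lemma abs_coord_mul_le (hx : IsUncondBasis q x) (hq : IsQuasiBanach q) (f : M) (n : ι) :
    |hx.coord hq n f| * q (x n) ≤ hx.partialSumNorm hq f := by
  simpa only [Finset.sum_singleton, hq.q_smul] using hx.q_sum_coord_le hq f {n}

lemma q_le_partialSumNorm (hx : IsUncondBasis q x) (hq : IsQuasiBanach q) (f : M) :
    q f ≤ hq.modulus * hx.partialSumNorm hq f :=
  (hx.uncondSum_coord hq f).q_le hq (hx.q_sum_coord_le hq f)

lemma exists_tendsto_coord (hx : IsUncondBasis q x) (hq : IsQuasiBanach q) {f : ℕ → M}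
    (hf : ∀ ε : ℝ, 0 < ε → ∃ N, ∀ k ≥ N, ∀ l ≥ N, hx.partialSumNorm hq (f k - f l) < ε) (n : ι) :
    ∃ b, Tendsto (fun k => hx.coord hq n (f k)) atTop (𝓝 b) := by
  have hxn := hq.q_pos _ (hx.ne_zero hq n)
  refine cauchySeq_tendsto_of_complete (Metric.cauchySeq_iff.2 fun ε hε => ?_)
  obtain ⟨N, hN⟩ := hf (ε * q (x n)) (by positivity)
  refine ⟨N, fun k hk l hl => ?_⟩
  rw [Real.dist_eq, ← map_sub]
  exact lt_of_mul_lt_mul_right ((hx.abs_coord_mul_le hq _ n).trans_lt (hN k hk l hl)) hxn.le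

lemma tendstoUniformly_sum_coord (hx : IsUncondBasis q x) (hq : IsQuasiBanach q) [UniformSpace M]
    [IsUniformAddGroup M] [ContinuousSMul ℝ M] (hτ : HasBallBasis q) {f : ℕ → M}
    (hf : ∀ ε : ℝ, 0 < ε → ∃ N, ∀ k ≥ N, ∀ l ≥ N, hx.partialSumNorm hq (f k - f l) < ε)
    {b : ι → ℝ} (hb : ∀ n, Tendsto (fun k => hx.coord hq n (f k)) atTop (𝓝 (b n))) :
    TendstoUniformly (fun k (F : Finset ι) => ∑ n ∈ F, hx.coord hq n (f k) • x n)
      (fun F => ∑ n ∈ F, b n • x n) atTop := by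
  refine tendstoUniformlyOn_univ.1 (UniformCauchySeqOn.tendstoUniformlyOn_of_tendsto
    (fun u hu => ?_) fun F _ => tendsto_finsetSum F fun n _ => (hb n).smul_const (x n))
  obtain ⟨ε, hε, hεu⟩ := hτ.uniformity_hasBasis.mem_iff.1 hu
  obtain ⟨N, hN⟩ := hf ε hε
  filter_upwards [(eventually_ge_atTop N).prod_mk (eventually_ge_atTop N)] with k hk F _
  refine hεu ?_
  rw [Set.mem_ofPred_eq, ← Finset.sum_sub_distrib]
  simp only [← sub_smul, ← map_sub]
  exact (hx.q_sum_coord_le hq _ F).trans_lt (hN _ hk.2 _ hk.1)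

lemma partialSumNorm_complete (hx : IsUncondBasis q x) (hq : IsQuasiBanach q) (f : ℕ → M)
    (hf : ∀ ε : ℝ, 0 < ε → ∃ N, ∀ k ≥ N, ∀ l ≥ N, hx.partialSumNorm hq (f k - f l) < ε) :
    ∃ g, Tendsto (fun k => hx.partialSumNorm hq (f k - g)) atTop (𝓝 0) := by
  have hC := hq.modulus_pos
  obtain ⟨_, _, _, _, _, _, hτ⟩ := hq.exists_uniformSpace
  choose b hb using hx.exists_tendsto_coord hq hf
  have hunif := hx.tendstoUniformly_sum_coord hq hτ hf hb
  obtain ⟨g, hg⟩ := hq.complete f fun ε hε => by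
    obtain ⟨N, hN⟩ := hf (ε / hq.modulus) (by positivity)
    refine ⟨N, fun k hk l hl => (hx.q_le_partialSumNorm hq _).trans_lt ?_⟩
    rw [mul_comm, ← lt_div_iff₀ hC]
    exact hN k hk l hl
  have hsum : HasSum (fun n => b n • x n) g :=
    hunif.tendsto_of_eventually_tendsto (Eventually.of_forall fun k =>
      (uncondSum_iff_hasSum hτ).1 (hx.uncondSum_coord hq (f k)))
      ((tendsto_nhds_iff_of_basis hτ).2 fun ε hε => hg.eventually_lt_const hε)
  have hgb := hx.coord_of_uncondSum hq ((uncondSum_iff_hasSum hτ).2 hsum)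
  refine ⟨g, tendsto_order.2 ⟨fun ε hε => Eventually.of_forall fun k =>
    hε.trans_le (Real.iSup_nonneg fun _ => hq.q_nonneg _), fun ε hε => ?_⟩⟩
  filter_upwards [hunif _ (hτ.uniformity_hasBasis.mem_of_mem (half_pos hε))] with k hk
  refine (ciSup_le fun F => ?_).trans_lt (half_lt_self hε)
  simp only [map_sub, hgb, sub_smul, Finset.sum_sub_distrib]
  exact (hk F).le

lemma isQuasiBanach_partialSumNorm (hx : IsUncondBasis q x) (hq : IsQuasiBanach q) :
    IsQuasiBanach (hx.partialSumNorm hq) where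
  q_nonneg f := Real.iSup_nonneg fun _ => hq.q_nonneg _
  q_pos f hf := by
    have := (hq.q_pos f hf).trans_le (hx.q_le_partialSumNorm hq f)
    exact pos_of_mul_pos_right this hq.modulus_pos.le
  q_smul c f := by
    simp only [partialSumNorm, Real.mul_iSup_of_nonneg (abs_nonneg c), map_smul, smul_assoc,
      ← Finset.smul_sum, hq.q_smul]
  quasi_triangle := by
    have hC := hq.modulus_pos
    refine ⟨hq.modulus, hq.one_le_modulus, fun f g => ciSup_le fun F => ?_⟩
    simp only [map_add, add_smul, Finset.sum_add_distrib]
    refine (hq.q_add_le _ _).trans ?_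
    gcongr
    exacts [hx.q_sum_coord_le hq f F, hx.q_sum_coord_le hq g F]
  complete := hx.partialSumNorm_complete hq

lemma exists_partialSumNorm_le (hx : IsUncondBasis q x) (hq : IsQuasiBanach q) :
    ∃ R > 0, ∀ f, hx.partialSumNorm hq f ≤ R * q f := by
  obtain ⟨R, hR, hle⟩ := exists_preimage_le (hx.isQuasiBanach_partialSumNorm hq) hq
    (T := LinearMap.id) (hx.q_le_partialSumNorm hq) Function.surjective_id
  refine ⟨R, hR, fun f => ?_⟩
  obtain ⟨_, rfl, hf⟩ := hle f
  exact hf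

lemma exists_multiplier_bound (hx : IsUncondBasis q x) (hq : IsQuasiBanach q) :
    ∃ K > 0, ∀ (f : M) (F : Finset ι) (a : ι → ℝ), (∀ n, |a n| ≤ 1) →
      q (∑ n ∈ F, (a n * hx.coord hq n f) • x n) ≤ K * q f := by
  obtain ⟨R, hR, hpq⟩ := hx.exists_partialSumNorm_le hq
  obtain ⟨D, hD, hmul⟩ := exists_q_sum_smul_le (α := ι) hq
  refine ⟨D * R, by positivity, fun f F a ha => ?_⟩
  simp only [mul_smul]
  calc q (∑ n ∈ F, a n • hx.coord hq n f • x n) ≤ D * hx.partialSumNorm hq f :=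
        hmul F _ _ (fun G _ => hx.q_sum_coord_le hq f G) a ha
    _ ≤ D * (R * q f) := by gcongr; exact hpq f
    _ = D * R * q f := (mul_assoc _ _ _).symm

lemma exists_abs_coord_le (hx : IsUncondBasis q x) (hq : IsQuasiBanach q) (n : ι) :
    ∃ B > 0, ∀ f, |hx.coord hq n f| ≤ B * q f := by
  have hxn := hq.q_pos _ (hx.ne_zero hq n)
  obtain ⟨R, hR, hpq⟩ := hx.exists_partialSumNorm_le hq
  refine ⟨R / q (x n), by positivity, fun f => ?_⟩
  rw [div_mul_eq_mul_div, le_div_iff₀ hxn]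
  exact (hx.abs_coord_mul_le hq f n).trans (hpq f)

end IsUncondBasis

section Families

variable {M M' M'' α β : Type*} [AddCommGroup M] [Module ℝ M] [AddCommGroup M'] [Module ℝ M']
  [AddCommGroup M''] [Module ℝ M''] {q : M → ℝ} {q' : M' → ℝ} {q'' : M'' → ℝ}
  {u : α → M} {v : α → M'} {w : α → M''}

/-- The family `u` dominates `v`: the correspondence `u n ↦ v n` extends to a bounded linear map
on finite linear combinations. -/
def Dominates (q : M → ℝ) (q' : M' → ℝ) (u : α → M) (v : α → M') : Prop :=
  ∃ D > 0, ∀ a : α →₀ ℝ,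
    q' (Finsupp.linearCombination ℝ v a) ≤ D * q (Finsupp.linearCombination ℝ u a)

/-- Two families dominate each other. This is `EquivalentFamilies` with some constant. -/
def AreEquivalent (q : M → ℝ) (q' : M' → ℝ) (u : α → M) (v : α → M') : Prop :=
  Dominates q q' u v ∧ Dominates q' q v u

/-- The quasi-norm of a finite linear combination of `u` is, up to a constant, an increasing
function of the moduli of its coefficients. -/
def Unconditional (q : M → ℝ) (u : α → M) : Prop :=
  ∃ K > 0, ∀ a b : α →₀ ℝ, (∀ n, |b n| ≤ |a n|) →
    q (Finsupp.linearCombination ℝ u b) ≤ K * q (Finsupp.linearCombination ℝ u a)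

lemma Dominates.refl (q : M → ℝ) (u : α → M) : Dominates q q u u :=
  ⟨1, one_pos, fun _ => (one_mul _).ge⟩

lemma Dominates.trans (h : Dominates q q' u v) (h' : Dominates q' q'' v w) :
    Dominates q q'' u w := by
  obtain ⟨D, hD, h⟩ := h
  obtain ⟨D', hD', h'⟩ := h'
  refine ⟨D' * D, mul_pos hD' hD, fun a => (h' a).trans ?_⟩
  rw [mul_assoc]
  exact mul_le_mul_of_nonneg_left (h a) hD'.le

lemma Dominates.comp (h : Dominates q q' u v) (f : β → α) :
    Dominates q q' (fun m => u (f m)) (fun m => v (f m)) := by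
  obtain ⟨D, hD, h⟩ := h
  refine ⟨D, hD, fun a => ?_⟩
  simpa only [Finsupp.linearCombination_mapDomain] using! h (a.mapDomain f)

lemma dominates_of_bounded (u : α → M) (T : M →ₗ[ℝ] M') {D : ℝ} (hD : 0 < D)
    (hT : ∀ f, q' (T f) ≤ D * q f) : Dominates q q' u fun n => T (u n) :=
  ⟨D, hD, fun a => by
    simpa only [Finsupp.apply_linearCombination] using! hT (Finsupp.linearCombination ℝ u a)⟩

lemma Dominates.exists_sum_le (h : Dominates q q' u v) :
    ∃ D > 0, ∀ (F : Finset α) (a : α → ℝ),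
      q' (∑ n ∈ F, a n • v n) ≤ D * q (∑ n ∈ F, a n • u n) := by
  obtain ⟨D, hD, h⟩ := h
  refine ⟨D, hD, fun F a => ?_⟩
  simpa only [map_sum, Finsupp.linearCombination_single] using
    h (∑ n ∈ F, Finsupp.single n (a n))

lemma AreEquivalent.refl (q : M → ℝ) (u : α → M) : AreEquivalent q q u u :=
  ⟨Dominates.refl q u, Dominates.refl q u⟩

lemma AreEquivalent.symm (h : AreEquivalent q q' u v) : AreEquivalent q' q v u :=
  And.symm h

lemma AreEquivalent.trans (h : AreEquivalent q q' u v) (h' : AreEquivalent q' q'' v w) :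
    AreEquivalent q q'' u w :=
  ⟨h.1.trans h'.1, h'.2.trans h.2⟩

lemma AreEquivalent.comp (h : AreEquivalent q q' u v) (f : β → α) :
    AreEquivalent q q' (fun m => u (f m)) (fun m => v (f m)) :=
  ⟨h.1.comp f, h.2.comp f⟩

lemma EquivalentFamilies.areEquivalent {C : ℝ} (hC : 0 < C) (h : EquivalentFamilies q q' u v C) :
    AreEquivalent q q' u v :=
  ⟨⟨C, hC, fun a => (h a).2⟩, ⟨C, hC, fun a => (inv_mul_le_iff₀ hC).1 (h a).1⟩⟩

lemma AreEquivalent.exists_equivalentFamilies (hq : ∀ f, 0 ≤ q f) (hq' : ∀ f, 0 ≤ q' f)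
    (h : AreEquivalent q q' u v) :
    ∃ C > 0, EquivalentFamilies q q' u v C := by
  obtain ⟨⟨D, hD, h⟩, ⟨D', -, h'⟩⟩ := h
  refine ⟨max D D', lt_max_of_lt_left hD, fun a => ⟨?_, (h a).trans ?_⟩⟩
  · rw [inv_mul_le_iff₀ (lt_max_of_lt_left hD)]
    exact (h' a).trans (mul_le_mul_of_nonneg_right (le_max_right D D') (hq' _))
  · exact mul_le_mul_of_nonneg_right (le_max_left D D') (hq _)

lemma Unconditional.comp (hu : Unconditional q u) {f : β → α} (hf : Function.Injective f) :
    Unconditional q fun m => u (f m) := by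
  obtain ⟨K, hK, hu⟩ := hu
  refine ⟨K, hK, fun a b hab => ?_⟩
  suffices h : ∀ n, |b.mapDomain f n| ≤ |a.mapDomain f n| by
    simpa only [Finsupp.linearCombination_mapDomain] using! hu _ _ h
  intro n
  by_cases hn : n ∈ Set.range f
  · obtain ⟨m, rfl⟩ := hn
    simpa only [Finsupp.mapDomain_apply hf] using hab m
  · simp only [Finsupp.mapDomain_of_notMem_range _ _ hn, le_refl]

lemma linearCombination_pointwise_smul (c : α → ℝ) (u : α → M) (a : α →₀ ℝ) :
    Finsupp.linearCombination ℝ (fun n => c n • u n) a = Finsupp.linearCombination ℝ u (c • a) := by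
  have hsupp : (c • a).support ⊆ a.support := fun n hn => by
    rw [Finsupp.mem_support_iff] at hn ⊢
    exact right_ne_zero_of_mul hn
  rw [Finsupp.linearCombination_apply, Finsupp.linearCombination_apply,
    Finsupp.sum_of_support_subset _ hsupp _ fun n _ => zero_smul ℝ (u n)]
  refine Finset.sum_congr rfl fun n _ => ?_
  simp only [Finsupp.coe_pointwise_smul, Pi.smul_apply', smul_eq_mul, smul_smul, mul_comm]

lemma Unconditional.smul (hu : Unconditional q u) (c : α → ℝ) :
    Unconditional q fun n => c n • u n := by
  obtain ⟨K, hK, hu⟩ := hu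
  refine ⟨K, hK, fun a b hab => ?_⟩
  simp only [linearCombination_pointwise_smul]
  refine hu _ _ fun n => ?_
  simp only [Finsupp.coe_pointwise_smul, Pi.smul_apply', smul_eq_mul, abs_mul]
  exact mul_le_mul_of_nonneg_left (hab n) (abs_nonneg _)

lemma Unconditional.dominates_smul (hq : IsQuasiBanach q) (hu : Unconditional q u) {c : α → ℝ}
    {B : ℝ} (hB : 0 < B) (hc : ∀ n, |c n| ≤ B) : Dominates q q u fun n => c n • u n := by
  obtain ⟨K, hK, hu⟩ := hu
  refine ⟨K * B, by positivity, fun a => ?_⟩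
  rw [linearCombination_pointwise_smul, mul_assoc, ← abs_of_pos hB, ← hq.q_smul, ← map_smul]
  refine hu _ _ fun n => ?_
  simp only [Finsupp.coe_pointwise_smul, Pi.smul_apply', Finsupp.smul_apply, smul_eq_mul, abs_mul]
  exact mul_le_mul_of_nonneg_right ((hc n).trans (le_abs_self B)) (abs_nonneg _)

lemma Unconditional.areEquivalent_smul (hq : IsQuasiBanach q) (hu : Unconditional q u)
    {c : α → ℝ} {A B : ℝ} (hA : 0 < A) (hB : 0 < B) (hAc : ∀ n, A ≤ |c n|)
    (hcB : ∀ n, |c n| ≤ B) : AreEquivalent q q u fun n => c n • u n := by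
  refine ⟨hu.dominates_smul hq hB hcB, ?_⟩
  have hinv := (hu.smul c).dominates_smul hq (inv_pos.2 hA) (c := fun n => (c n)⁻¹) fun n => by
    rw [abs_inv]
    exact inv_anti₀ hA (hAc n)
  have hc : ∀ n, c n ≠ 0 := fun n => abs_pos.1 (hA.trans_le (hAc n))
  simpa only [inv_smul_smul₀ (hc _)] using hinv

lemma linearCombination_subtypeDomain (u : α → M) (a : α →₀ ℝ) (p : α → Prop)
    [DecidablePred p] :
    Finsupp.linearCombination ℝ (fun n : {n // p n} => u n) (a.subtypeDomain p) =
      Finsupp.linearCombination ℝ u (a.filter p) := by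
  have : a.subtypeDomain p = (a.filter p).subtypeDomain p :=
    Finsupp.ext fun n => (Finsupp.filter_apply_pos p a n.2).symm
  rw [this, Finsupp.linearCombination_apply, Finsupp.linearCombination_apply]
  exact Finsupp.sum_subtypeDomain_index (h := fun n r => r • u n)
    fun n hn => (Finset.mem_filter.1 hn).2

lemma sum_linearCombination_fiber {τ : Type*} [Fintype τ] (c : α → τ) (u : α → M)
    (a : α →₀ ℝ) :
    ∑ t, Finsupp.linearCombination ℝ (fun n : {n // c n = t} => u n)
      (a.subtypeDomain fun n => c n = t) = Finsupp.linearCombination ℝ u a := by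
  classical
  simp only [linearCombination_subtypeDomain, ← map_sum]
  congr 1
  ext n
  simp [Finsupp.finsetSum_apply, Finsupp.filter_apply]

lemma Unconditional.exists_subtypeDomain_le (hu : Unconditional q u) :
    ∃ K > 0, ∀ (a : α →₀ ℝ) (p : α → Prop),
      q (Finsupp.linearCombination ℝ (fun n : {n // p n} => u n) (a.subtypeDomain p)) ≤
        K * q (Finsupp.linearCombination ℝ u a) := by
  classical
  obtain ⟨K, hK, hu⟩ := hu
  refine ⟨K, hK, fun a p => ?_⟩
  rw [linearCombination_subtypeDomain]
  refine hu _ _ fun n => ?_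
  rw [Finsupp.filter_apply]
  split_ifs
  exacts [le_rfl, abs_zero.trans_le (abs_nonneg _)]

lemma Dominates.of_fibers {τ : Type*} [Finite τ] (hq : IsQuasiBanach q)
    (hq' : IsQuasiBanach q') (hu : Unconditional q u) (c : α → τ)
    (h : ∀ t, Dominates q q' (fun n : {n // c n = t} => u n) fun n => v n) :
    Dominates q q' u v := by
  have := Fintype.ofFinite τ
  have hC := hq'.modulus_pos
  obtain ⟨K, hK, hu⟩ := hu.exists_subtypeDomain_le
  choose D hD h using h
  have hsum : 0 ≤ ∑ t, D t := Finset.sum_nonneg fun t _ => (hD t).le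
  refine ⟨hq'.modulus ^ Fintype.card τ * ((∑ t, D t + 1) * K), by positivity, fun a => ?_⟩
  have hq0 := hq.q_nonneg (Finsupp.linearCombination ℝ u a)
  calc q' (Finsupp.linearCombination ℝ v a)
      ≤ hq'.modulus ^ Fintype.card τ *
          ∑ t, q' (Finsupp.linearCombination ℝ (fun n : {n // c n = t} => v n)
            (a.subtypeDomain fun n => c n = t)) := by
        rw [← sum_linearCombination_fiber c v a]
        exact hq'.q_sum_le _ _
    _ ≤ hq'.modulus ^ Fintype.card τ *
          ∑ t, D t * (K * q (Finsupp.linearCombination ℝ u a)) := by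
        gcongr with t
        exact (h t _).trans (mul_le_mul_of_nonneg_left (hu a _) (hD t).le)
    _ ≤ hq'.modulus ^ Fintype.card τ *
          ((∑ t, D t + 1) * (K * q (Finsupp.linearCombination ℝ u a))) := by
        rw [← Finset.sum_mul]
        gcongr
        linarith
    _ = _ := by ring

lemma AreEquivalent.of_fibers {τ : Type*} [Finite τ] (hq : IsQuasiBanach q)
    (hq' : IsQuasiBanach q') (hu : Unconditional q u) (hv : Unconditional q' v) (c : α → τ)
    (h : ∀ t, AreEquivalent q q' (fun n : {n // c n = t} => u n) fun n => v n) :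
    AreEquivalent q q' u v :=
  ⟨Dominates.of_fibers hq hq' hu c fun t => (h t).1,
    Dominates.of_fibers hq' hq hv c fun t => (h t).2⟩

end Families

section Operators

variable {M M' ι κ : Type*} [AddCommGroup M] [Module ℝ M] [AddCommGroup M'] [Module ℝ M']
  {q : M → ℝ} {q' : M' → ℝ} {x : ι → M} {T : M →ₗ[ℝ] M'} {R : M' →ₗ[ℝ] M}

lemma IsUncondBasis.unconditional (hx : IsUncondBasis q x) (hq : IsQuasiBanach q) :
    Unconditional q x := by
  obtain ⟨K, hK, hmul⟩ := hx.exists_multiplier_bound hq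
  refine ⟨K, hK, fun a b hab => ?_⟩
  rw [Finsupp.linearCombination_apply ℝ b]
  convert hmul (Finsupp.linearCombination ℝ x a) b.support (fun n => b n / a n) fun n => ?_
    using 2
  · refine Finset.sum_congr rfl fun n _ => ?_
    dsimp only
    rw [hx.coord_linearCombination hq, div_mul_cancel_of_imp fun ha => ?_]
    exact abs_nonpos_iff.1 ((hab n).trans_eq (abs_eq_zero.2 ha))
  · rw [abs_div]
    exact div_le_one_of_le₀ (hab n) (abs_nonneg _)

lemma IsUncondBasis.ext_of_bounded (hx : IsUncondBasis q x) (hq : IsQuasiBanach q)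
    (hq' : IsQuasiBanach q') {T R : M →ₗ[ℝ] M'} {D E : ℝ} (hT : ∀ f, q' (T f) ≤ D * q f)
    (hR : ∀ f, q' (R f) ≤ E * q f) (h : ∀ n, T (x n) = R (x n)) (f : M) : T f = R f := by
  have hTf := (hx.uncondSum_coord hq f).map hq hq' T hT
  have hRf := (hx.uncondSum_coord hq f).map hq hq' R hR
  simp only [map_smul, h] at hTf hRf
  exact hTf.unique hq' hRf

lemma IsUncondBasis.exists_uncondSum_of_dominates (hx : IsUncondBasis q x) (hq : IsQuasiBanach q)
    (hq' : IsQuasiBanach q') {v : ι → M'} (h : Dominates q q' x v) (f : M) :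
    ∃ g, UncondSum q' (fun n => hx.coord hq n f • v n) g := by
  obtain ⟨D, hD, hle⟩ := h.exists_sum_le
  refine (exists_uncondSum_iff_vanishing hq').2 fun ε hε => ?_
  obtain ⟨s, hs⟩ := (exists_uncondSum_iff_vanishing hq).1 ⟨f, hx.uncondSum_coord hq f⟩ (ε / D)
    (by positivity)
  exact ⟨s, fun t ht => (hle t _).trans_lt ((lt_div_iff₀' hD).1 (hs t ht))⟩

lemma IsUncondBasis.exists_lift (hx : IsUncondBasis q x) (hq : IsQuasiBanach q)
    (hq' : IsQuasiBanach q') {v : ι → M'} (h : Dominates q q' x v) :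
    ∃ (L : M →ₗ[ℝ] M') (D : ℝ), 0 < D ∧ (∀ f, q' (L f) ≤ D * q f) ∧ ∀ n, L (x n) = v n := by
  choose L hL using hx.exists_uncondSum_of_dominates hq hq' h
  obtain ⟨D, hD, hle⟩ := h.exists_sum_le
  obtain ⟨R, hR, hpq⟩ := hx.exists_partialSumNorm_le hq
  have hC := hq'.modulus_pos
  refine ⟨
    { toFun := L
      map_add' := fun f g => (hL (f + g)).unique hq' ?_
      map_smul' := fun c f => (hL (c • f)).unique hq' ?_ },
    hq'.modulus * (D * R), by positivity, fun f => ?_, fun n => ?_⟩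
  · simpa only [map_add, add_smul] using (hL f).add hq' (hL g)
  · simpa only [map_smul, smul_assoc, RingHom.id_apply] using (hL f).const_smul hq' c
  · rw [mul_assoc, mul_assoc]
    refine (hL f).q_le hq' fun F => (hle F _).trans (mul_le_mul_of_nonneg_left ?_ hD.le)
    exact (hx.q_sum_coord_le hq f F).trans (hpq f)
  · have hv : ∀ m ∉ ({n} : Finset ι), hx.coord hq m (x n) • v m = 0 := fun m hm => by
      rw [hx.coord_apply, Finsupp.single_eq_of_ne (Finset.notMem_singleton.1 hm), zero_smul]
    have hsum := uncondSum_sum_of_eq_zero hq' hv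
    rw [Finset.sum_singleton, hx.coord_apply_self, one_smul] at hsum
    exact (hL (x n)).unique hq' hsum

lemma Dominates.extend (hq : IsQuasiBanach q) (hq' : IsQuasiBanach q') (hx : Unconditional q x)
    {y : κ → M'} {α : κ → ι} (hα : Function.Injective α)
    (h : Dominates q q' (fun m => x (α m)) y) :
    Dominates q q' x (Function.extend α y 0) := by
  classical
  refine Dominates.of_fibers hq hq' hx (fun n => decide (n ∈ Set.range α)) fun t => ?_
  cases t with
  | false =>
    have hzero (n : {n // decide (n ∈ Set.range α) = false}) :
        Function.extend α y 0 n = (0 : M') :=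
      Function.extend_apply' _ _ _ (of_decide_eq_false n.2)
    refine ⟨1, one_pos, fun a => ?_⟩
    simp only [Finsupp.linearCombination_apply, Finsupp.sum, hzero, smul_zero,
      Finset.sum_const_zero, hq'.q_zero, one_mul]
    exact hq.q_nonneg _
  | true =>
    have hex (n : {n // decide (n ∈ Set.range α) = true}) : ∃ m, α m = n := of_decide_eq_true n.2
    choose γ hγ using hex
    convert h.comp γ using 2 with n n
    · rw [hγ]
    · rw [← hγ, hα.extend_apply]

/-- `T` is a bounded embedding of `(M, q)` into `(M', q')` with bounded left inverse `R`, so that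
`T` identifies `M` with a complemented subspace of `M'`. -/
structure IsComplementedEmbedding (q : M → ℝ) (q' : M' → ℝ) (T : M →ₗ[ℝ] M')
    (R : M' →ₗ[ℝ] M) : Prop where
  exists_bound : ∃ D > 0, ∀ f, q' (T f) ≤ D * q f
  exists_bound_leftInverse : ∃ E > 0, ∀ f, q (R f) ≤ E * q' f
  leftInverse : ∀ f, R (T f) = f

lemma isComplementedEmbedding_id (q : M → ℝ) :
    IsComplementedEmbedding q q LinearMap.id LinearMap.id :=
  ⟨⟨1, one_pos, fun _ => (one_mul _).ge⟩, ⟨1, one_pos, fun _ => (one_mul _).ge⟩, fun _ => rfl⟩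

lemma IsUncondBasis.exists_isComplementedEmbedding (hx : IsUncondBasis q x)
    (hq : IsQuasiBanach q) (hq' : IsQuasiBanach q') {y : κ → M'} (hy : IsUncondBasis q' y)
    {α : κ → ι} (hα : Function.Injective α) (h : AreEquivalent q' q y fun m => x (α m)) :
    ∃ (T : M' →ₗ[ℝ] M) (R : M →ₗ[ℝ] M'), IsComplementedEmbedding q' q T R ∧
      ∀ m, T (y m) = x (α m) := by
  obtain ⟨T, D, hD, hT, hTy⟩ := hy.exists_lift hq' hq h.1
  obtain ⟨R, E, hE, hR, hRx⟩ := hx.exists_lift hq hq'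
    (Dominates.extend hq hq' (hx.unconditional hq) hα h.2)
  refine ⟨T, R, ⟨⟨D, hD, hT⟩, ⟨E, hE, hR⟩, fun f => ?_⟩, hTy⟩
  refine hy.ext_of_bounded hq' hq' (T := R ∘ₗ T) (R := LinearMap.id) (D := E * D) (E := 1)
    (fun g => ?_) (fun g => (one_mul _).ge) (fun m => ?_) f
  · rw [mul_assoc]
    exact (hR (T g)).trans (mul_le_mul_of_nonneg_left (hT g) hE.le)
  · rw [LinearMap.comp_apply, hTy, hRx, hα.extend_apply, LinearMap.id_apply]

lemma IsUncondBasis.inClosedSpan_map (hx : IsUncondBasis q x) (hq : IsQuasiBanach q)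
    (hq' : IsQuasiBanach q') {D : ℝ} (hT : ∀ f, q' (T f) ≤ D * q f) (f : M) :
    InClosedSpan q' (fun n => T (x n)) (T f) := by
  have hTf := (hx.uncondSum_coord hq f).map hq hq' T hT
  simp only [map_smul] at hTf
  exact hTf.inClosedSpan hq'

lemma IsUncondBasis.smul (hx : IsUncondBasis q x) {c : ι → ℝ} (hc : ∀ n, c n ≠ 0) :
    IsUncondBasis q fun n => c n • x n := by
  intro f
  obtain ⟨a, ha, hunique⟩ := hx f
  refine ⟨fun n => a n / c n, ?_, fun b hb => funext fun n => ?_⟩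
  · simpa only [smul_smul, div_mul_cancel₀ _ (hc _)] using ha
  · simp only [smul_smul] at hb
    rw [← hunique _ hb, mul_div_cancel_right₀ _ (hc n)]

lemma IsComplementedEmbedding.isUncondBasicSeq (h : IsComplementedEmbedding q q' T R)
    (hq : IsQuasiBanach q) (hq' : IsQuasiBanach q') (hx : IsUncondBasis q x) :
    IsUncondBasicSeq q' fun n => T (x n) := by
  obtain ⟨⟨D, -, hT⟩, ⟨E, -, hR⟩, hRT⟩ := h
  intro f hf
  have hTR : T (R f) = f := by
    obtain ⟨_, _, _, _, _, _, hτ⟩ := hq.exists_uniformSpace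
    obtain ⟨_, _, _, _, _, _, hτ'⟩ := hq'.exists_uniformSpace
    have hcT := continuous_of_quasiNorm_le hτ hτ' hq.q_nonneg T hT
    have hcR := continuous_of_quasiNorm_le hτ' hτ hq'.q_nonneg R hR
    rw [inClosedSpan_iff_mem_closure hq' hτ'] at hf
    refine Set.EqOn.closure (f := fun g => T (R g)) (g := id) ?_ (hcT.comp hcR) continuous_id hf
    refine LinearMap.eqOn_span' (f := T ∘ₗ R) (g := LinearMap.id) ?_
    rintro _ ⟨n, rfl⟩
    exact congrArg T (hRT (x n))
  refine ⟨fun n => hx.coord hq n (R f), ?_, fun a ha => funext fun n => ?_⟩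
  · simpa only [map_smul, hTR] using (hx.uncondSum_coord hq (R f)).map hq hq' T hT
  · have hRf := ha.map hq' hq R hR
    simp only [map_smul, hRT] at hRf
    exact (hx.coord_of_uncondSum hq hRf n).symm

lemma IsComplementedEmbedding.exists_kComplemented (h : IsComplementedEmbedding q q' T R)
    (hq : IsQuasiBanach q) (hx : IsUncondBasis q x) :
    ∃ K > 0, KComplemented q' (fun n => T (x n)) K := by
  obtain ⟨⟨D, hD, hT⟩, ⟨E, hE, hR⟩, hRT⟩ := h
  obtain ⟨K, hK, hmul⟩ := hx.exists_multiplier_bound hq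
  refine ⟨D * (K * E), by positivity, fun n => hx.coord hq n ∘ₗ R, fun n => ?_, fun n => ?_,
    fun n m hnm => ?_, fun a ha f hf F => ?_⟩
  · obtain ⟨B, hB, hcoord⟩ := hx.exists_abs_coord_le hq n
    refine ⟨B * E, fun f => (hcoord (R f)).trans ?_⟩
    rw [mul_assoc]
    exact mul_le_mul_of_nonneg_left (hR f) hB.le
  · rw [LinearMap.comp_apply, hRT, hx.coord_apply_self]
  · rw [LinearMap.comp_apply, hRT, hx.coord_apply, Finsupp.single_eq_of_ne hnm]
  · calc q' (∑ n ∈ F, (a n * hx.coord hq n (R f)) • T (x n))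
        = q' (T (∑ n ∈ F, (a n * hx.coord hq n (R f)) • x n)) := by
          simp only [map_sum, map_smul]
      _ ≤ D * q (∑ n ∈ F, (a n * hx.coord hq n (R f)) • x n) := hT _
      _ ≤ D * (K * q (R f)) := by gcongr; exact hmul (R f) F a ha
      _ ≤ D * (K * (E * 1)) := by
        gcongr
        exact (hR f).trans (mul_le_mul_of_nonneg_left hf hE.le)
      _ = D * (K * E) := by rw [mul_one]

lemma IsComplementedEmbedding.exists_normalizing_scalars (h : IsComplementedEmbedding q q' T R)
    (hq : IsQuasiBanach q) (hq' : IsQuasiBanach q') (hx : IsUncondBasis q x)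
    (hnorm : Normalized q x) :
    ∃ c : ι → ℝ, (∀ n, c n ≠ 0) ∧ Normalized q' (fun n => T (c n • x n)) ∧
      AreEquivalent q q' x fun n => T (c n • x n) := by
  obtain ⟨⟨D, hD, hT⟩, ⟨E, hE, hR⟩, hRT⟩ := h
  have hupper (n : ι) : q' (T (x n)) ≤ D := by simpa only [hnorm n, mul_one] using hT (x n)
  have hlower (n : ι) : 1 ≤ E * q' (T (x n)) := by simpa only [hRT, hnorm n] using hR (T (x n))
  have hpos (n : ι) : 0 < q' (T (x n)) :=
    pos_of_mul_pos_right (one_pos.trans_le (hlower n)) hE.le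
  have habs (n : ι) : |(q' (T (x n)))⁻¹| = (q' (T (x n)))⁻¹ := abs_of_pos (inv_pos.2 (hpos n))
  refine ⟨fun n => (q' (T (x n)))⁻¹, fun n => (inv_pos.2 (hpos n)).ne', fun n => ?_, ?_⟩
  · simp only [map_smul, hq'.q_smul, habs, inv_mul_cancel₀ (hpos n).ne']
  · refine ((hx.unconditional hq).areEquivalent_smul hq (inv_pos.2 hD) hE (fun n => ?_)
      fun n => ?_).trans ⟨dominates_of_bounded _ T hD hT, ?_⟩
    · exact (inv_anti₀ (hpos n) (hupper n)).trans_eq (habs n).symm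
    · rw [habs]
      exact (inv_le_iff_one_le_mul₀ (hpos n)).2 (hlower n)
    · simpa only [hRT] using
        dominates_of_bounded (fun n => T ((q' (T (x n)))⁻¹ • x n)) R hE hR

end Operators

section Embeddings

variable {M M' M'' ι κ τ : Type*} [AddCommGroup M] [Module ℝ M] [AddCommGroup M'] [Module ℝ M']
  [AddCommGroup M''] [Module ℝ M''] {q : M → ℝ} {q' : M' → ℝ} {q'' : M'' → ℝ}
  {x : ι → M} {y : κ → M'}

lemma qPow_single (hq : IsQuasiBanach q) {s : ℕ} (j : Fin s) (f : M) :
    qPow q s (Pi.single j f) = q f := by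
  have : Nonempty (Fin s) := ⟨j⟩
  refine le_antisymm (ciSup_le fun i => ?_) ?_
  · rcases eq_or_ne i j with rfl | hij
    · rw [Pi.single_eq_same]
    · rw [Pi.single_eq_of_ne hij, hq.q_zero]
      exact hq.q_nonneg f
  · have := le_ciSup (Set.finite_range fun i => q ((Pi.single j f : Fin s → M) i)).bddAbove j
    rwa [Pi.single_eq_same] at this

lemma areEquivalent_single (hq : IsQuasiBanach q) {s : ℕ} (j : Fin s) (x : ι → M) :
    AreEquivalent q (qPow q s) x fun n => Pi.single j (x n) := by
  have hsingle (a : ι →₀ ℝ) :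
      Finsupp.linearCombination ℝ (fun n => (Pi.single j (x n) : Fin s → M)) a =
        Pi.single j (Finsupp.linearCombination ℝ x a) :=
    (Finsupp.apply_linearCombination ℝ (LinearMap.single ℝ (fun _ => M) j) x a).symm
  constructor <;> refine ⟨1, one_pos, fun a => ?_⟩ <;> rw [hsingle, qPow_single hq, one_mul]

lemma areEquivalent_fiber_of_powerFamily (hq : IsQuasiBanach q) {S : Set ι} {s : ℕ}
    {p : κ → Fin s × S} (h : AreEquivalent q' (qPow q s) y fun m => powerFamily x S s (p m))
    (j : Fin s) :
    AreEquivalent q' q (fun m : {m // (p m).1 = j} => y m) fun m => x (p m).2 := by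
  refine (h.comp Subtype.val).trans ?_
  convert (areEquivalent_single hq j fun m : {m // (p m).1 = j} => x (p m).2).symm using 2 with m
  rw [powerFamily, m.2]

/-- `y` is equivalent to a subfamily of a finite power of `x`. A term of the power is an index
`(j, n)`, and the equivalence is imposed on each copy `j` separately, which for unconditional
families amounts to equivalence in the product. -/
def EmbedsInPower (q' : M' → ℝ) (q : M → ℝ) (y : κ → M') (x : ι → M) : Prop :=
  ∃ (s : ℕ) (p : κ → Fin s × ι), Function.Injective p ∧
    ∀ j, AreEquivalent q' q (fun m : {m // (p m).1 = j} => y m) fun m => x (p m).2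

/-- `x` contains infinitely many disjoint subfamilies, each equivalent to `x`. -/
def HasDisjointCopies (q : M → ℝ) (x : ι → M) : Prop :=
  ∃ σ : ℕ × ι → ι, Function.Injective σ ∧ ∀ i, AreEquivalent q q x fun n => x (σ (i, n))

/-- The image of a basis under a complemented embedding, once normalized, is a sequence
to which power universality applies. -/
lemma PowerUniversal.embedsInPower {κ : Type} [Countable κ] {y : κ → M'}
    (hPU : PowerUniversal q x) (hq : IsQuasiBanach q) (hq' : IsQuasiBanach q')
    (hy : IsUncondBasis q' y) (hnorm : Normalized q' y) {T : M' →ₗ[ℝ] M} {R : M →ₗ[ℝ] M'}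
    (hTR : IsComplementedEmbedding q' q T R) {S : Set ι}
    (hspan : ∀ f, InClosedSpan q (fun n : S => x n) (T f)) :
    EmbedsInPower q' q y fun n : S => x n := by
  obtain ⟨c, hc, hcnorm, hcy⟩ := hTR.exists_normalizing_scalars hq' hq hy hnorm
  obtain ⟨K, hK, hKc⟩ := hTR.exists_kComplemented hq' (hy.smul hc)
  obtain ⟨s, C, hC, h⟩ := hPU K hK
  obtain ⟨A, π, hπ⟩ := h S κ ‹_› (fun m => T (c m • y m)) (fun m => hspan _)
    (hTR.isUncondBasicSeq hq' hq (hy.smul hc)) hcnorm hKc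
  exact ⟨s, fun m => π m, Subtype.val_injective.comp π.injective,
    areEquivalent_fiber_of_powerFamily hq (hcy.trans (hπ.areEquivalent hC))⟩

lemma EmbedsInPower.trans_right {z : τ → M''} (h : EmbedsInPower q' q y x)
    {f : ι → τ} (hf : Function.Injective f) (hxz : AreEquivalent q q'' x fun n => z (f n)) :
    EmbedsInPower q' q'' y z := by
  obtain ⟨s, p, hp, h⟩ := h
  exact ⟨s, fun m => ((p m).1, f (p m).2), (Function.injective_id.prodMap hf).comp hp,
    fun j => (h j).trans (hxz.comp _)⟩

lemma injective_iterate_of_disjoint_ranges {f g : ι → ι} (hf : Function.Injective f)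
    (hg : Function.Injective g) (hfg : ∀ n m, f n ≠ g m) :
    Function.Injective fun p : ℕ × ι => g^[p.1] (f p.2) := by
  rintro ⟨i, n⟩ ⟨j, m⟩ h
  dsimp only at h
  wlog hij : i ≤ j generalizing i j n m
  · exact (this j m i n h.symm (le_of_not_ge hij)).symm
  obtain ⟨k, rfl⟩ := Nat.exists_eq_add_of_le hij
  rw [Function.iterate_add_apply] at h
  cases k with
  | zero => exact congrArg (Prod.mk i) (hf (hg.iterate i h))
  | succ k =>
    rw [Function.iterate_succ_apply'] at h
    exact absurd (hg.iterate i h) (hfg _ _)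

lemma PermutativelyEquivalent.hasDisjointCopies (hq : IsQuasiBanach q)
    (h : PermutativelyEquivalent q (qPow q 2) x (powerFamily x Set.univ 2)) :
    HasDisjointCopies q x := by
  obtain ⟨π, C, hC, h⟩ := h
  set τ : Fin 2 → ι → ι := fun j n => π.symm (j, ⟨n, trivial⟩) with hτ_def
  have hτ (j : Fin 2) : AreEquivalent q q x fun n => x (τ j n) := by
    have hj := (areEquivalent_fiber_of_powerFamily hq (h.areEquivalent hC) j).comp
      fun n => ⟨τ j n, by simp only [hτ_def, Equiv.apply_symm_apply]⟩
    simpa only [hτ_def, Equiv.apply_symm_apply] using hj.symm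
  have hinj (j : Fin 2) : Function.Injective (τ j) := fun n m hnm =>
    congrArg (fun p => (p.2 : ι)) (π.symm.injective hnm)
  have hdisj (n m : ι) : τ 0 n ≠ τ 1 m := fun hnm =>
    zero_ne_one (congrArg Prod.fst (π.symm.injective hnm))
  refine ⟨fun p => (τ 1)^[p.1] (τ 0 p.2),
    injective_iterate_of_disjoint_ranges (hinj 0) (hinj 1) hdisj, fun i => ?_⟩
  induction i with
  | zero => exact hτ 0
  | succ i ih =>
    simp only [Function.iterate_succ_apply']
    exact ih.trans ((hτ 1).comp fun n => (τ 1)^[i] (τ 0 n))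

lemma EmbedsInPower.exists_injective_of_copies_right (hq : IsQuasiBanach q)
    (hq' : IsQuasiBanach q') (hx : Unconditional q x) (hy : Unconditional q' y)
    (hcopies : HasDisjointCopies q x) (h : EmbedsInPower q' q y x) :
    ∃ α : κ → ι, Function.Injective α ∧ AreEquivalent q' q y fun m => x (α m) := by
  obtain ⟨σ, hσ, hσx⟩ := hcopies
  obtain ⟨s, p, hp, h⟩ := h
  have hα : Function.Injective fun m => σ ((p m).1, (p m).2) :=
    hσ.comp ((Fin.val_injective.prodMap Function.injective_id).comp hp)
  refine ⟨_, hα, AreEquivalent.of_fibers hq' hq hy (hx.comp hα) (fun m => (p m).1) fun j => ?_⟩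
  have hj := (h j).trans ((hσx j).comp fun m : {m // (p m).1 = j} => (p m).2)
  have hfst (m : {m // (p m).1 = j}) : ((p m).1 : ℕ) = j := congrArg Fin.val m.2
  simpa only [hfst] using hj

lemma exists_injective_of_prod_copies {s : ℕ} {β : ι → Fin s × κ} (hβ : Function.Injective β)
    {σ : ℕ × ι → ι} (hσ : Function.Injective σ) :
    ∃ ψ : ι → κ, Function.Injective ψ ∧ ∀ n, ∃ i : Fin s, (β (σ (i, n))).2 = ψ n := by
  classical
  let N (n : ι) : Finset κ := Finset.univ.image fun i : Fin s => (β (σ (i, n))).2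
  -- `Fin s × A` injects into `Fin s × ⋃ n ∈ A, N n`, which is Hall's condition.
  have hall (A : Finset ι) : A.card ≤ (A.biUnion N).card := by
    rcases A.eq_empty_or_nonempty with rfl | ⟨n, -⟩
    · exact Nat.zero_le _
    refine Nat.le_of_mul_le_mul_left ?_ (Fin.pos (β n).1)
    simpa only [Finset.card_product, Finset.card_univ, Fintype.card_fin] using
      Finset.card_le_card_of_injOn (s := (Finset.univ : Finset (Fin s)) ×ˢ A)
        (t := Finset.univ ×ˢ A.biUnion N) (fun p => β (σ (p.1, p.2)))
        (fun p hp => Finset.mem_product.2 ⟨Finset.mem_univ _, Finset.mem_biUnion.2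
          ⟨p.2, (Finset.mem_product.1 hp).2, Finset.mem_image_of_mem _ (Finset.mem_univ p.1)⟩⟩)
        (hβ.comp (hσ.comp (Fin.val_injective.prodMap Function.injective_id))).injOn
  obtain ⟨ψ, hψ, hψN⟩ := (Finset.all_card_le_biUnion_card_iff_exists_injective N).1 hall
  refine ⟨ψ, hψ, fun n => ?_⟩
  obtain ⟨i, -, hi⟩ := Finset.mem_image.1 (hψN n)
  exact ⟨i, hi⟩

lemma EmbedsInPower.exists_injective_of_copies_left (hq : IsQuasiBanach q)
    (hq' : IsQuasiBanach q') (hx : Unconditional q x) (hy : Unconditional q' y)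
    (hcopies : HasDisjointCopies q x) (h : EmbedsInPower q q' x y) :
    ∃ ψ : ι → κ, Function.Injective ψ ∧ AreEquivalent q q' x fun n => y (ψ n) := by
  obtain ⟨σ, hσ, hσx⟩ := hcopies
  obtain ⟨s, β, hβ, h⟩ := h
  obtain ⟨ψ, hψ, hex⟩ := exists_injective_of_prod_copies hβ hσ
  choose i hi using hex
  refine ⟨ψ, hψ, AreEquivalent.of_fibers hq hq' hx (hy.comp hψ)
    (fun n => (i n, (β (σ (i n, n))).1)) fun t => ?_⟩
  have hfst (n : {n // (i n, (β (σ (i n, n))).1) = t}) : i n = t.1 := congrArg Prod.fst n.2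
  have hsnd (n : {n // (i n, (β (σ (i n, n))).1) = t}) : (β (σ (t.1, n))).1 = t.2 := by
    rw [← hfst n]
    exact congrArg Prod.snd n.2
  have ht := ((hσx t.1).comp Subtype.val).trans
    ((h t.2).comp fun n : {n // (i n, (β (σ (i n, n))).1) = t} => ⟨σ (t.1, n), hsnd n⟩)
  convert ht using 2 with n
  rw [← hi, hfst n]

lemma permutativelyEquivalent_of_embeddings (hq : IsQuasiBanach q) (hq' : IsQuasiBanach q')
    (hx : Unconditional q x) (hy : Unconditional q' y) {α : κ → ι} (hα : Function.Injective α)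
    (hyx : AreEquivalent q' q y fun m => x (α m)) {ψ : ι → κ} (hψ : Function.Injective ψ)
    (hxy : AreEquivalent q q' x fun n => y (ψ n)) : PermutativelyEquivalent q' q y x := by
  classical
  obtain ⟨h, hbij, hrel⟩ := Function.Embedding.schroeder_bernstein_of_rel hα hψ
    (fun m n => α m = n ∨ ψ n = m) (fun _ => Or.inl rfl) fun _ => Or.inr rfl
  have hequiv : AreEquivalent q' q y fun m => x (h m) := by
    refine AreEquivalent.of_fibers hq' hq hy (hx.comp hbij.injective)
      (fun m => decide (α m = h m)) fun t => ?_
    cases t with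
    | true =>
      have hαh (m : {m // decide (α m = h m) = true}) : α m = h m := of_decide_eq_true m.2
      simpa only [hαh] using hyx.comp (Subtype.val : {m // decide (α m = h m) = true} → κ)
    | false =>
      have hψh (m : {m // decide (α m = h m) = false}) : ψ (h m) = m :=
        (hrel m).resolve_left (of_decide_eq_false m.2)
      simpa only [hψh] using
        hxy.symm.comp fun m : {m // decide (α m = h m) = false} => h m
  obtain ⟨C, hC, hequiv⟩ := hequiv.exists_equivalentFamilies hq'.q_nonneg hq.q_nonneg
  exact ⟨Equiv.ofBijective h hbij, C, hC, hequiv⟩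

end Embeddings

section UniqueBasis

variable {M : Type*} [AddCommGroup M] [Module ℝ M] {q : M → ℝ} {ι κ : Type} {x : ι → M}
  {y : κ → M}

lemma PowerUniversal.embedsInPower_of_basis [Countable κ] (hPU : PowerUniversal q x)
    (hq : IsQuasiBanach q) (hx : IsUncondBasis q x) (hy : IsUncondBasis q y)
    (hynorm : Normalized q y) :
    EmbedsInPower q q y x := by
  refine (hPU.embedsInPower hq hq hy hynorm (isComplementedEmbedding_id q) (S := Set.univ)
    fun f => ?_).trans_right Subtype.val_injective (AreEquivalent.refl q _)
  refine (hx.inClosedSpan_map hq hq (T := LinearMap.id) (fun g => (one_mul _).ge) f).mono hq ?_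
  rintro _ ⟨n, rfl⟩
  exact ⟨⟨n, trivial⟩, rfl⟩

lemma PowerUniversal.embedsInPower_of_subfamily [Countable ι] (hPU : PowerUniversal q x)
    (hq : IsQuasiBanach q) (hx : IsUncondBasis q x) (hxnorm : Normalized q x)
    (hy : IsUncondBasis q y) {α : κ → ι} (hα : Function.Injective α)
    (hyx : AreEquivalent q q y fun m => x (α m)) :
    EmbedsInPower q q x y := by
  obtain ⟨T, R, hTR, hT⟩ := hx.exists_isComplementedEmbedding hq hq hy hα hyx
  obtain ⟨D, -, hD⟩ := hTR.exists_bound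
  refine (hPU.embedsInPower hq hq hx hxnorm hTR (S := Set.range α) fun f => ?_).trans_right
    (Equiv.ofInjective α hα).symm.injective ?_
  · refine (hy.inClosedSpan_map hq hq hD f).mono hq ?_
    rintro _ ⟨m, rfl⟩
    exact ⟨⟨α m, m, rfl⟩, (hT m).symm⟩
  · simpa only [Equiv.apply_ofInjective_symm] using hyx.symm.comp (Equiv.ofInjective α hα).symm

end UniqueBasis

theorem unique_uncond_basis_of_powerUniversal
    {M : Type*} [AddCommGroup M] [Module ℝ M] (q : M → ℝ) (hq : IsQuasiBanach q)
    {ι : Type} [Countable ι] (x : ι → M)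
    (hbasis : IsUncondBasis q x) (hnorm : Normalized q x)
    (hPU : PowerUniversal q x)
    (hsq : PermutativelyEquivalent q (qPow q 2) x (powerFamily x Set.univ 2)) :
    ∀ (κ : Type) (_ : Countable κ) (y : κ → M),
      IsUncondBasis q y → Normalized q y → PermutativelyEquivalent q q y x := by
  intro κ _ y hy hynorm
  have hx_uncond := hbasis.unconditional hq
  have hy_uncond := hy.unconditional hq
  have hcopies := hsq.hasDisjointCopies hq
  obtain ⟨α, hα, hyx⟩ := (hPU.embedsInPower_of_basis hq hbasis hy hynorm)
    |>.exists_injective_of_copies_right hq hq hx_uncond hy_uncond hcopies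
  obtain ⟨ψ, hψ, hxy⟩ := (hPU.embedsInPower_of_subfamily hq hbasis hnorm hy hα hyx)
    |>.exists_injective_of_copies_left hq hq hx_uncond hy_uncond hcopies
  exact permutativelyEquivalent_of_embeddings hq hq hx_uncond hy_uncond hα hyx hψ hxy

end
end
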